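/- arXiv:1310.5829 — 5 statements merged into one kernel-verified Lean document; each statement's English description precedes it below -/
import Mathlib

section
/- For each f ∈ C(E) and each initial state Z₀ ∈ E∖E₀, the weighted average (1/n) Σ_{i=0}^{n−1} f(Z_i)τ_i converges in probability to π₀(f/r) as n → ∞; moreover, the convergence is uniform with respect to Z₀ in any compact subset of E∖E₀. -/
open MeasureTheory ProbabilityTheory Filter Topology Set ENNReal

noncomputable section

/-- The data of transition rates `c(x,dy) = r(x) p(x,y) λ(dy)` on a state space `E`,
satisfying Assumption 1.1 (i)-(iii): `r` is continuous and nonnegative, `λ` is a probability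
measure which is strictly positive on open sets, `p` is a strictly positive continuous
transition density, and `1/r` is `λ`-integrable. -/
structure ChainSetting (E : Type*) [MeasurableSpace E] [TopologicalSpace E] where
  r : E → ℝ
  r_cont : Continuous r
  r_nonneg : ∀ x, 0 ≤ r x
  lam : Measure E
  lam_prob : IsProbabilityMeasure lam
  lam_pos : ∀ U : Set E, IsOpen U → U.Nonempty → 0 < lam U
  p : E → E → ℝ
  p_cont : Continuous fun z : E × E => p z.1 z.2
  p_pos : ∀ x y, 0 < p x y
  p_int : ∀ x, ∫ y, p x y ∂lam = 1
  inv_r_int : ∫⁻ x, (ENNReal.ofReal (r x))⁻¹ ∂lam ≠ ∞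

namespace ChainSetting

variable {E : Type*} [MeasurableSpace E] [TopologicalSpace E] (S : ChainSetting E)

/-- The (closed) set `E₀ = {x : r(x) = 0}` of absorbing states. -/
def E0 : Set E := {x | S.r x = 0}

/-- The skeleton transition probability `p(x,dy) = p(x,y) λ(dy)`. -/
def skel (x : E) : Measure E := S.lam.withDensity fun y => ENNReal.ofReal (S.p x y)

/-- The jump rates `c(x,dy) = r(x) p(x,y) λ(dy)`. -/
def cMeas (x : E) : Measure E := S.lam.withDensity fun y => ENNReal.ofReal (S.r x * S.p x y)

/-- The measure `μ(dx) c(x,dy)` on `E × E`. -/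
def muc (μ : Measure E) : Measure (E × E) :=
  (μ.prod S.lam).withDensity fun z => ENNReal.ofReal (S.r z.1 * S.p z.1 z.2)

/-- The invariant probability `π(dx) = π₀(1/r)⁻¹ π₀(dx)/r(x)` of the continuous-time chain,
built from the invariant probability `π₀` of the skeleton, cf. (1.2). -/
def piMeas (π₀ : Measure E) : Measure E :=
  (∫⁻ x, (ENNReal.ofReal (S.r x))⁻¹ ∂π₀)⁻¹ •
    π₀.withDensity fun x => (ENNReal.ofReal (S.r x))⁻¹

/-- Assumption 1.1 (iv): with `A_δ = {r < δ}`, there is a sequence `δ_n → 0` with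
`λ(A_{2δ_n}) ≤ C λ(A_{2δ_n} \ A_{δ_n})`. -/
def CondIV : Prop :=
  ∃ δ : ℕ → ℝ, (∀ n, 0 < δ n) ∧ Tendsto δ atTop (𝓝 0) ∧
    ∃ C : ℝ≥0∞, C ≠ ∞ ∧ ∀ n,
      S.lam {x | S.r x < 2 * δ n} ≤ C * S.lam ({x | S.r x < 2 * δ n} \ {x | S.r x < δ n})

end ChainSetting

/-- Trajectories of the jump process: the skeleton chain `ω.1` together with the holding
times `ω.2` (with value `∞` allowed, corresponding to absorption). -/
abbrev Traj (E : Type*) := (ℕ → E) × (ℕ → ℝ≥0∞)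

namespace Traj

variable {E : Type*}

/-- The jump times `T_n = τ_0 + ⋯ + τ_{n-1}`. -/
def jumpTime (n : ℕ) (ω : Traj E) : ℝ≥0∞ := ∑ i ∈ Finset.range n, ω.2 i

/-- The position at time `t`: `X_t = Z_n` for `T_n ≤ t < T_{n+1}`. -/
def pos (t : ℝ) (ω : Traj E) : E := ω.1 (sInf {n | ENNReal.ofReal t < jumpTime (n + 1) ω})

end Traj

/-- The exponential law of parameter `ρ`, as a measure on `ℝ≥0∞`; for `ρ ≤ 0` it is the Dirac
mass at `∞` (infinite holding time at an absorbing state). -/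
def expMeasE (ρ : ℝ) : Measure ℝ≥0∞ :=
  if 0 < ρ then
    Measure.map ENNReal.ofReal
      (MeasureTheory.volume.withDensity fun s =>
        Set.indicator (Set.Ioi (0 : ℝ)) (fun s => ENNReal.ofReal (ρ * Real.exp (-(ρ * s)))) s)
  else Measure.dirac ∞

/-- `P` is the law of the continuous-time Markov chain with holding rates `ρ` and skeleton
transition kernel `κ`, started at `x`: the skeleton `ω.1` is a Markov chain with kernel `κ`
started at `x`, and conditionally on the skeleton the holding times `ω.2 i` are independent
exponential random variables of parameters `ρ(Z_i)`. -/
structure IsChainLaw {E : Type*} [MeasurableSpace E]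
    (ρ : E → ℝ) (κ : E → Measure E) (x : E) (P : Measure (Traj E)) : Prop where
  prob : IsProbabilityMeasure P
  init : P.map (fun ω => ω.1 0) = Measure.dirac x
  markov : ∀ (n : ℕ) (f : (Fin (n + 1) → E) → ℝ≥0∞) (g : E → ℝ≥0∞),
    Measurable f → Measurable g →
    ∫⁻ ω, f (fun i => ω.1 i) * g (ω.1 (n + 1)) ∂P
      = ∫⁻ ω, f (fun i => ω.1 i) * ∫⁻ y, g y ∂κ (ω.1 n) ∂P
  holding : ∀ (n : ℕ) (f : (ℕ → E) → ℝ≥0∞) (g : Fin n → ℝ≥0∞ → ℝ≥0∞),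
    Measurable f → (∀ i, Measurable (g i)) →
    ∫⁻ ω, f ω.1 * ∏ i : Fin n, g i (ω.2 i) ∂P
      = ∫⁻ ω, f ω.1 * ∏ i : Fin n, ∫⁻ s, g i s ∂expMeasE (ρ (ω.1 i)) ∂P

/-- The empirical measure `μ_T` of (2.2), as a measure on `E`. -/
def empMeas {E : Type*} [MeasurableSpace E] (T : ℝ) (ω : Traj E) : Measure E :=
  (ENNReal.ofReal T)⁻¹ •
    Measure.map (fun t => Traj.pos t ω) (MeasureTheory.volume.restrict (Set.Ioc 0 T))

open Classical in
/-- The empirical flow `Q_T`, as a measure on `E × E`: `(1/T)` times the sum of the Dirac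
masses at the jumps `(X_{t⁻}, X_t)` occurring at times `t ∈ [0,T]`. -/
def empFlow {E : Type*} [MeasurableSpace E] (T : ℝ) (ω : Traj E) : Measure (E × E) :=
  (ENNReal.ofReal T)⁻¹ • Measure.sum fun n : ℕ =>
    if Traj.jumpTime (n + 1) ω ≤ ENNReal.ofReal T ∧ ω.1 n ≠ ω.1 (n + 1)
    then Measure.dirac (ω.1 n, ω.1 (n + 1)) else 0

open Classical in
/-- Bundle a measure as a probability measure (junk value if it is not one). -/
def toPM {α : Type*} [MeasurableSpace α] [Nonempty α] (μ : Measure α) : ProbabilityMeasure α :=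
  if h : IsProbabilityMeasure μ then ⟨μ, h⟩
  else ⟨Measure.dirac (Classical.arbitrary α), by infer_instance⟩

open Classical in
/-- Bundle a measure as a finite measure (junk value if it is not one). -/
def toFM {α : Type*} [MeasurableSpace α] (μ : Measure α) : FiniteMeasure α :=
  if h : IsFiniteMeasure μ then ⟨μ, h⟩ else 0

/-- The pair empirical measure–empirical flow `(μ_T, Q_T)`, as a random element of
`M₁(E) × M₊(E×E)`. -/
def empPair {E : Type*} [MeasurableSpace E] [Nonempty E] (T : ℝ) (ω : Traj E) :
    ProbabilityMeasure E × FiniteMeasure (E × E) :=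
  (toPM (empMeas T ω), toFM (empFlow T ω))

variable {E : Type*} [MeasurableSpace E] [TopologicalSpace E] [PolishSpace E]
  [CompactSpace E] [BorelSpace E] [Nonempty E]

set_option linter.unusedSectionVars false

lemma aux_exp_pos (ρ : ℝ) (hρ : 0 < ρ) (g : ℝ≥0∞ → ℝ≥0∞) (hg : Measurable g) :
    ∫⁻ s, g s ∂expMeasE ρ
      = ∫⁻ s in Set.Ioi (0:ℝ), ENNReal.ofReal (ρ * Real.exp (-(ρ * s))) * g (ENNReal.ofReal s) := by
  rw [expMeasE, if_pos hρ, lintegral_map hg ENNReal.measurable_ofReal,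
    lintegral_withDensity_eq_lintegral_mul _ ?_ (show Measurable fun s : ℝ => g (ENNReal.ofReal s) from hg.comp ENNReal.measurable_ofReal),
    ← lintegral_indicator measurableSet_Ioi]
  · congr 1
    ext s
    by_cases hs : s ∈ Set.Ioi (0:ℝ) <;> simp [hs]
  · exact Measurable.indicator (by fun_prop) measurableSet_Ioi

lemma aux_exp_prob (ρ : ℝ) : ∫⁻ _, 1 ∂expMeasE ρ = 1 := by
  by_cases hρ : 0 < ρ
  · rw [aux_exp_pos ρ hρ _ measurable_const]
    simp only [mul_one]
    have key := Real.integral_rpow_mul_exp_neg_mul_Ioi (a := 1) (r := ρ) one_pos hρ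
    simp only [sub_self, Real.rpow_zero, one_mul, Real.rpow_one, Real.Gamma_one, mul_one] at key
    have hint : IntegrableOn (fun x ↦ Real.exp (-(ρ * x))) (Set.Ioi 0) :=
      .of_integral_ne_zero (by rw [key]; positivity)
    rw [← ofReal_integral_eq_lintegral_ofReal (hint.const_mul ρ)
      (ae_of_all _ fun x => by positivity), integral_const_mul, key]
    rw [mul_one_div_cancel hρ.ne', ENNReal.ofReal_one]
  · simp [expMeasE, hρ]

lemma aux_exp_mean (ρ : ℝ) : ∫⁻ s, s ∂expMeasE ρ = (ENNReal.ofReal ρ)⁻¹ := by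
  by_cases hρ : 0 < ρ
  · rw [aux_exp_pos ρ hρ _ measurable_id']
    have key := Real.integral_rpow_mul_exp_neg_mul_Ioi (a := 2) (r := ρ) two_pos hρ
    norm_num at key
    have hint : IntegrableOn (fun x ↦ x * Real.exp (-(ρ * x))) (Set.Ioi 0) :=
      .of_integral_ne_zero (by rw [key]; positivity)
    have h2 : ∫⁻ s in Set.Ioi (0:ℝ), ENNReal.ofReal (ρ * Real.exp (-(ρ * s))) * ENNReal.ofReal s
       = ∫⁻ s in Set.Ioi (0:ℝ), ENNReal.ofReal (ρ * (s * Real.exp (-(ρ * s)))) := by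
      congr 1
      ext s
      rw [← ENNReal.ofReal_mul (by positivity)]
      congr 1; ring
    rw [h2, ← ofReal_integral_eq_lintegral_ofReal (hint.const_mul ρ), integral_const_mul, key]
    · rw [← ENNReal.ofReal_inv_of_pos hρ]
      congr 1; field_simp
    · refine (ae_restrict_iff' measurableSet_Ioi).2 (ae_of_all _ fun x hx => ?_)
      have : (0:ℝ) < x := hx
      simp only [Pi.zero_apply]
      positivity
  · have : ρ ≤ 0 := not_lt.1 hρ
    simp [expMeasE, hρ, ENNReal.ofReal_of_nonpos this]

lemma aux_exp_meas (g : ℝ≥0∞ → ℝ≥0∞) (hg : Measurable g) :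
    Measurable fun ρ : ℝ => ∫⁻ s, g s ∂expMeasE ρ := by
  have : (fun ρ : ℝ => ∫⁻ s, g s ∂expMeasE ρ) = fun ρ => if 0 < ρ then
      ∫⁻ s in Set.Ioi (0:ℝ), ENNReal.ofReal (ρ * Real.exp (-(ρ * s))) * g (ENNReal.ofReal s)
      else g ∞ := by
    ext ρ
    split_ifs with h
    · exact aux_exp_pos ρ h g hg
    · rw [expMeasE, if_neg h, lintegral_dirac' _ hg]
  rw [this]
  refine Measurable.ite measurableSet_Ioi ?_ measurable_const
  refine Measurable.lintegral_prod_right' (f := fun z : ℝ × ℝ =>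
    ENNReal.ofReal (z.1 * Real.exp (-(z.1 * z.2))) * g (ENNReal.ofReal z.2)) ?_
  fun_prop

/-- passing from nonnegative test functions to bounded ones -/
lemma aux_bdd {Ω α : Type*} [MeasurableSpace Ω] [MeasurableSpace α] (μ : Measure Ω)
    [IsProbabilityMeasure μ] (X : Ω → α) (hX : Measurable X) (u v : Ω → ℝ≥0∞)
    (hu : Measurable u) (hv : Measurable v) (C : ℝ≥0∞) (hC : C ≠ ∞)
    (huC : ∀ ω, u ω ≤ C) (hvC : ∀ ω, v ω ≤ C)
    (h : ∀ F : α → ℝ≥0∞, Measurable F → ∫⁻ ω, F (X ω) * u ω ∂μ = ∫⁻ ω, F (X ω) * v ω ∂μ)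
    (F : α → ℝ) (hF : Measurable F) (B : ℝ) (hB : ∀ a, |F a| ≤ B) :
    ∫ ω, F (X ω) * (u ω).toReal ∂μ = ∫ ω, F (X ω) * (v ω).toReal ∂μ := by
  have key : ∀ G : α → ℝ, Measurable G → (∀ a, 0 ≤ G a) →
      ∫ ω, G (X ω) * (u ω).toReal ∂μ = ∫ ω, G (X ω) * (v ω).toReal ∂μ := by
    intro G hG hG0
    rw [integral_eq_lintegral_of_nonneg_ae, integral_eq_lintegral_of_nonneg_ae]
    · have := h (fun a => ENNReal.ofReal (G a)) (by fun_prop)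
      congr 1
      convert this using 3 with ω ω
      · rw [ENNReal.ofReal_mul (hG0 _), ENNReal.ofReal_toReal (ne_top_of_le_ne_top hC (huC _))]
      · rw [ENNReal.ofReal_mul (hG0 _), ENNReal.ofReal_toReal (ne_top_of_le_ne_top hC (hvC _))]
    · exact ae_of_all _ fun ω => mul_nonneg (hG0 _) ENNReal.toReal_nonneg
    · exact ((hG.comp hX).mul hv.ennreal_toReal).aestronglyMeasurable
    · exact ae_of_all _ fun ω => mul_nonneg (hG0 _) ENNReal.toReal_nonneg
    · exact ((hG.comp hX).mul hu.ennreal_toReal).aestronglyMeasurable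
  have int : ∀ w : Ω → ℝ≥0∞, Measurable w → (∀ ω, w ω ≤ C) → ∀ G : α → ℝ, Measurable G →
      (∀ a, |G a| ≤ B) → Integrable (fun ω => G (X ω) * (w ω).toReal) μ := by
    intro w hw hwC G hG hGB
    refine Integrable.of_bound ((hG.comp hX).mul hw.ennreal_toReal).aestronglyMeasurable
      (B * C.toReal) (ae_of_all _ fun ω => ?_)
    rw [norm_mul, Real.norm_eq_abs, Real.norm_eq_abs, abs_of_nonneg ENNReal.toReal_nonneg]
    exact mul_le_mul (hGB _) (ENNReal.toReal_mono hC (hwC _)) ENNReal.toReal_nonneg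
      ((abs_nonneg _).trans (hGB (X ω)))
  have h1 := key (fun a => F a + B) (by fun_prop) (fun a => by linarith [neg_abs_le (F a), hB a])
  have h2 := key (fun a => |B|) (by fun_prop) (fun a => abs_nonneg _)
  have hB0 : ∀ ω : Ω, 0 ≤ B := fun ω => (abs_nonneg _).trans (hB (X ω))
  rcases isEmpty_or_nonempty Ω with hΩ | ⟨⟨ω₀⟩⟩
  · simp [Measure.eq_zero_of_isEmpty μ]
  rw [abs_of_nonneg (hB0 ω₀)] at h2
  have cB : ∀ a : α, |B| ≤ B := fun a => (abs_of_nonneg (hB0 ω₀)).le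
  simp only [add_mul] at h1
  rw [integral_add (int u hu huC F hF hB) (int u hu huC (fun _ => B) measurable_const cB),
    integral_add (int v hv hvC F hF hB) (int v hv hvC (fun _ => B) measurable_const cB), h2] at h1
  linarith

section Skel
variable (S : ChainSetting E)

lemma aux_p_bounds : ∃ m M : ℝ, 0 < m ∧ m < 1 ∧ 0 < M ∧ ∀ x y, m ≤ S.p x y ∧ S.p x y ≤ M := by
  obtain ⟨z, -, hz⟩ := isCompact_univ.exists_isMinOn (univ_nonempty (α := E × E))
    S.p_cont.continuousOn
  obtain ⟨w, -, hw⟩ := isCompact_univ.exists_isMaxOn (univ_nonempty (α := E × E))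
    S.p_cont.continuousOn
  refine ⟨min (S.p z.1 z.2) (1/2), S.p w.1 w.2, lt_min (S.p_pos _ _) (by norm_num),
    (min_le_right _ _).trans_lt (by norm_num), S.p_pos _ _, fun x y => ⟨?_, ?_⟩⟩
  · exact (min_le_left _ _).trans (hz (mem_univ (x, y)))
  · exact hw (mem_univ (x, y))

lemma aux_p_meas : Measurable fun z : E × E => S.p z.1 z.2 := S.p_cont.measurable

lemma aux_p_meas2 (x : E) : Measurable (S.p x) :=
  (aux_p_meas S).comp measurable_prodMk_left

lemma aux_p_int (x : E) : Integrable (S.p x) S.lam :=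
  .of_integral_ne_zero (by rw [S.p_int]; norm_num)

lemma aux_skel_lint (x : E) (g : E → ℝ≥0∞) (hg : Measurable g) :
    ∫⁻ y, g y ∂S.skel x = ∫⁻ y, ENNReal.ofReal (S.p x y) * g y ∂S.lam := by
  rw [ChainSetting.skel, lintegral_withDensity_eq_lintegral_mul _ ?_ hg]
  · rfl
  · exact (aux_p_meas2 S x).ennreal_ofReal

lemma aux_skel_prob (x : E) : IsProbabilityMeasure (S.skel x) := by
  constructor
  rw [← lintegral_one, aux_skel_lint S x _ measurable_const]
  simp only [mul_one]
  rw [← ofReal_integral_eq_lintegral_ofReal (aux_p_int S x)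
    (ae_of_all _ fun y => (S.p_pos x y).le), S.p_int, ENNReal.ofReal_one]

lemma aux_skel_lint_meas (g : E → ℝ≥0∞) (hg : Measurable g) :
    Measurable fun x => ∫⁻ y, g y ∂S.skel x := by
  have := S.lam_prob
  simp only [aux_skel_lint S _ g hg]
  refine Measurable.lintegral_prod_right' (f := fun z : E × E =>
    ENNReal.ofReal (S.p z.1 z.2) * g z.2) ?_
  have := aux_p_meas S
  fun_prop

lemma aux_skel_meas : Measurable S.skel := by
  refine Measure.measurable_of_measurable_coe _ fun s hs => ?_
  have := aux_skel_lint_meas S (s.indicator 1) (measurable_one.indicator hs)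
  simpa [lintegral_indicator_one hs] using this

lemma aux_skel_le (M : ℝ) (hM : ∀ x y, S.p x y ≤ M) (x : E) (g : E → ℝ≥0∞) (hg : Measurable g) :
    ∫⁻ y, g y ∂S.skel x ≤ ENNReal.ofReal M * ∫⁻ y, g y ∂S.lam := by
  rw [aux_skel_lint S x g hg, ← lintegral_const_mul _ hg]
  gcongr with y
  exact hM x y

/-- transition operator -/
def TrOp (h : E → ℝ) (x : E) : ℝ := ∫ y, h y ∂S.skel x

lemma TrOp_eq (h : E → ℝ) (x : E) : TrOp S h x = ∫ y, S.p x y * h y ∂S.lam := by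
  rw [TrOp, ChainSetting.skel, integral_withDensity_eq_integral_toReal_smul
    (aux_p_meas2 S x).ennreal_ofReal (ae_of_all _ fun _ => ENNReal.ofReal_lt_top)]
  congr 1; ext y
  rw [ENNReal.toReal_ofReal (S.p_pos x y).le, smul_eq_mul]

lemma TrOp_meas (h : E → ℝ) (hh : Measurable h) : Measurable (TrOp S h) := by
  have := S.lam_prob
  have e : TrOp S h = fun x => ∫ y, S.p x y * h y ∂S.lam := funext fun x => TrOp_eq S h x
  rw [e]
  have h1 : StronglyMeasurable (fun z : E × E => S.p z.1 z.2 * h z.2) :=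
    ((aux_p_meas S).mul (hh.comp measurable_snd)).stronglyMeasurable
  exact h1.integral_prod_right.measurable

lemma TrOp_osc (m : ℝ) (hm : ∀ x y, m ≤ S.p x y) (h : E → ℝ) (hh : Measurable h) (lo hi : ℝ)
    (hl : ∀ x, lo ≤ h x ∧ h x ≤ hi) (x : E) :
    m * ∫ y, h y ∂S.lam + (1 - m) * lo ≤ TrOp S h x ∧
    TrOp S h x ≤ m * ∫ y, h y ∂S.lam + (1 - m) * hi := by
  have := S.lam_prob
  have hb : ∀ y, ‖h y‖ ≤ max |lo| |hi| := fun y => abs_le_max_abs_abs (hl y).1 (hl y).2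
  have i0 : Integrable h S.lam := .of_bound hh.aestronglyMeasurable _ (ae_of_all _ hb)
  have i1 : Integrable (fun y => S.p x y * h y) S.lam :=
    (aux_p_int S x).mul_bdd (c := max |lo| |hi|) hh.aestronglyMeasurable (ae_of_all _ hb)
  have e : TrOp S h x = m * ∫ y, h y ∂S.lam + ∫ y, (S.p x y - m) * h y ∂S.lam := by
    rw [TrOp_eq, ← integral_const_mul, ← integral_add (i0.const_mul m)]
    · congr 1; ext y; ring
    · simp only [sub_mul]; exact i1.sub (i0.const_mul m)
  have i2 : Integrable (fun y => (S.p x y - m) * h y) S.lam := by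
    simp only [sub_mul]; exact i1.sub (i0.const_mul m)
  have i3 : ∀ a : ℝ, Integrable (fun y => (S.p x y - m) * a) S.lam := fun a =>
    ((aux_p_int S x).sub (integrable_const m)).mul_const a
  have e3 : ∀ a : ℝ, ∫ y, (S.p x y - m) * a ∂S.lam = (1 - m) * a := fun a => by
    rw [integral_mul_const, integral_sub (aux_p_int S x) (integrable_const m), S.p_int]; simp
  rw [e, ← e3, ← e3]
  constructor
  · refine add_le_add_right ?_ _
    exact integral_mono (i3 lo) i2 fun y =>
      mul_le_mul_of_nonneg_left (hl y).1 (sub_nonneg.2 (hm x y))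
  · refine add_le_add_right ?_ _
    exact integral_mono i2 (i3 hi) fun y =>
      mul_le_mul_of_nonneg_left (hl y).2 (sub_nonneg.2 (hm x y))

variable (π₀ : Measure E)

lemma aux_inv_lint (hπ₀inv : ∀ s : Set E, MeasurableSet s → ∫⁻ x, S.skel x s ∂π₀ = π₀ s)
    (g : E → ℝ≥0∞) (hg : Measurable g) :
    ∫⁻ x, ∫⁻ y, g y ∂S.skel x ∂π₀ = ∫⁻ x, g x ∂π₀ := by
  have : π₀.bind S.skel = π₀ := by
    ext s hs
    rw [Measure.bind_apply hs (aux_skel_meas S).aemeasurable, hπ₀inv s hs]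
  conv_rhs => rw [← this]
  rw [Measure.lintegral_bind (aux_skel_meas S).aemeasurable hg.aemeasurable]

lemma aux_pi_le (hπ₀ : IsProbabilityMeasure π₀)
    (hπ₀inv : ∀ s : Set E, MeasurableSet s → ∫⁻ x, S.skel x s ∂π₀ = π₀ s)
    (M : ℝ) (hM : ∀ x y, S.p x y ≤ M) (g : E → ℝ≥0∞) (hg : Measurable g) :
    ∫⁻ y, g y ∂π₀ ≤ ENNReal.ofReal M * ∫⁻ y, g y ∂S.lam := by
  rw [← aux_inv_lint S π₀ hπ₀inv g hg]
  calc _ ≤ ∫⁻ x, ENNReal.ofReal M * ∫⁻ y, g y ∂S.lam ∂π₀ :=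
        lintegral_mono fun x => aux_skel_le S M hM x g hg
    _ = _ := by simp

lemma aux_inv_int (hπ₀ : IsProbabilityMeasure π₀)
    (hπ₀inv : ∀ s : Set E, MeasurableSet s → ∫⁻ x, S.skel x s ∂π₀ = π₀ s)
    (h : E → ℝ) (hh : Measurable h) (B : ℝ) (hB : ∀ x, |h x| ≤ B) :
    ∫ x, TrOp S h x ∂π₀ = ∫ x, h x ∂π₀ := by
  have hsk := fun x => aux_skel_prob S x
  have hi : ∀ μ : Measure E, IsProbabilityMeasure μ → Integrable h μ := fun μ hμ =>
    .of_bound hh.aestronglyMeasurable B (ae_of_all _ hB)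
  have h1 : ∀ μ : Measure E, IsProbabilityMeasure μ →
      ∫⁻ x, ENNReal.ofReal (h x + B) ∂μ = ENNReal.ofReal (∫ x, h x ∂μ + B) := fun μ hμ => by
    rw [← ofReal_integral_eq_lintegral_ofReal (f := fun x => h x + B) ((hi μ hμ).add (integrable_const B))
      (ae_of_all _ fun x => by
        simp only [Pi.zero_apply]; linarith [neg_abs_le (h x), hB x]),
      integral_add (hi μ hμ) (integrable_const B)]
    simp
  have hT : ∀ μ : Measure E, IsProbabilityMeasure μ → |∫ x, h x ∂μ| ≤ B := fun μ hμ => by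
    have := norm_integral_le_of_norm_le_const (μ := μ) (f := h) (C := B) (ae_of_all _ hB)
    simpa using this
  have h2 := aux_inv_lint S π₀ hπ₀inv (fun x => ENNReal.ofReal (h x + B)) (by fun_prop)
  rw [h1 π₀ hπ₀] at h2
  simp only [h1 _ (hsk _)] at h2
  have iT : Integrable (TrOp S h) π₀ := .of_bound (TrOp_meas S h hh).aestronglyMeasurable B
    (ae_of_all _ fun x => hT _ (hsk x))
  have h3 := ofReal_integral_eq_lintegral_ofReal (iT.add (integrable_const B))
      (ae_of_all _ fun x => by
        have := hT _ (hsk x)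
        simp only [Pi.zero_apply, Pi.add_apply, TrOp]; linarith [neg_abs_le (∫ y, h y ∂S.skel x)])
  simp only [Pi.add_apply] at h3
  have h4 := h3.trans h2
  rw [integral_add iT (integrable_const B)] at h4
  have h5 : |∫ x, TrOp S h x ∂π₀| ≤ B := by
    have := norm_integral_le_of_norm_le_const (μ := π₀) (f := TrOp S h) (C := B)
      (ae_of_all _ fun x => hT _ (hsk x))
    simpa using this
  rw [ENNReal.ofReal_eq_ofReal_iff] at h4
  · simp at h4; exact h4
  · simp; linarith [neg_abs_le (∫ x, TrOp S h x ∂π₀)]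
  · linarith [neg_abs_le (∫ x, h x ∂π₀), hT π₀ hπ₀]

lemma aux_mix (hπ₀ : IsProbabilityMeasure π₀)
    (hπ₀inv : ∀ s : Set E, MeasurableSet s → ∫⁻ x, S.skel x s ∂π₀ = π₀ s)
    (m : ℝ) (hm : ∀ x y, m ≤ S.p x y) (h : E → ℝ)
    (hh : Measurable h) (B : ℝ)
    (hB : ∀ x, |h x| ≤ B) (h0 : ∫ x, h x ∂π₀ = 0) (d : ℕ) :
    Measurable ((TrOp S)^[d] h) ∧ (∀ x, |(TrOp S)^[d] h x| ≤ (1 - m) ^ d * (2 * B)) := by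
  have key : Measurable ((TrOp S)^[d] h) ∧ ∫ x, (TrOp S)^[d] h x ∂π₀ = 0 ∧
      ∃ lo hi, hi - lo = (1 - m)^d * (2 * B) ∧
        ∀ x, lo ≤ (TrOp S)^[d] h x ∧ (TrOp S)^[d] h x ≤ hi := by
    induction d with
    | zero =>
      exact ⟨hh, h0, -B, B, by ring, fun x => abs_le.1 (hB x)⟩
    | succ d ih =>
      obtain ⟨a, b, lo, hi, e, hb⟩ := ih
      rw [Function.iterate_succ_apply']
      refine ⟨TrOp_meas S _ a, ?_, _, _, ?_, fun x => TrOp_osc S m hm _ a lo hi hb x⟩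
      · rw [aux_inv_int S π₀ hπ₀ hπ₀inv _ a (max |lo| |hi|)
          fun x => abs_le_max_abs_abs (hb x).1 (hb x).2, b]
      · rw [pow_succ]; linear_combination (1 - m) * e
  obtain ⟨a, b, lo, hi, e, hb⟩ := key
  refine ⟨a, fun x => ?_⟩
  have hi0 : Integrable ((TrOp S)^[d] h) π₀ := .of_bound a.aestronglyMeasurable (max |lo| |hi|)
    (ae_of_all _ fun x => abs_le_max_abs_abs (hb x).1 (hb x).2)
  have l1 : lo ≤ 0 := by
    have := integral_mono (integrable_const lo) hi0 fun x => (hb x).1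
    rw [b] at this; simpa using this
  have l2 : 0 ≤ hi := by
    have := integral_mono hi0 (integrable_const hi) fun x => (hb x).2
    rw [b] at this; simpa using this
  rw [abs_le]
  constructor <;> linarith [(hb x).1, (hb x).2]

end Skel

lemma aux_geom (m : ℝ) (hm0 : 0 < m) (hm1 : m < 1) (n : ℕ) :
    ∑ i ∈ Finset.range n, (1 - m) ^ (n - i) ≤ 1 / m := by
  induction n with
  | zero => simp; exact hm0.le
  | succ n ih =>
    have e : ∑ i ∈ Finset.range n, (1 - m) ^ (n + 1 - i)
        = (1 - m) * ∑ i ∈ Finset.range n, (1 - m) ^ (n - i) := by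
      rw [Finset.mul_sum]
      refine Finset.sum_congr rfl fun i hi => ?_
      rw [← pow_succ']
      congr 1
      have := Finset.mem_range.1 hi
      omega
    rw [Finset.sum_range_succ, e]
    have h1 : (1 - m) * ∑ i ∈ Finset.range n, (1 - m) ^ (n - i) ≤ (1 - m) * (1 / m) :=
      mul_le_mul_of_nonneg_left ih (by linarith)
    have h2 : (1 - m) * (1 / m) = 1 / m - 1 := by field_simp
    have h3 : n + 1 - n = 1 := by omega
    rw [h3, pow_one]
    linarith

lemma aux_second {Ω : Type*} [MeasurableSpace Ω] (μ : Measure Ω) [IsProbabilityMeasure μ]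
    (W : ℕ → Ω → ℝ) (hW : ∀ i, Measurable (W i)) (H D m : ℝ) (hD : 0 ≤ D)
    (hm0 : 0 < m) (hm1 : m < 1) (hH : ∀ i ω, |W i ω| ≤ H)
    (hc : ∀ i j, i < j → |∫ ω, W i ω * W j ω ∂μ| ≤ D * (1 - m) ^ (j - i)) (n : ℕ) :
    ∫ ω, (∑ i ∈ Finset.range n, W i ω) ^ 2 ∂μ ≤ n * (H ^ 2 + 2 * (D / m)) := by
  have hij : ∀ i j, Integrable (fun ω => W i ω * W j ω) μ := fun i j => by
    refine .of_bound ((hW i).mul (hW j)).aestronglyMeasurable (H * H) (ae_of_all _ fun ω => ?_)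
    rw [norm_mul]
    exact mul_le_mul (hH i ω) (hH j ω) (norm_nonneg _) ((abs_nonneg _).trans (hH i ω))
  have hsq : ∀ n, Integrable (fun ω => (∑ i ∈ Finset.range n, W i ω) ^ 2) μ := fun n => by
    simp only [sq, Finset.sum_mul_sum]
    exact integrable_finsetSum _ fun i _ => integrable_finsetSum _ fun j _ => hij i j
  have hcr : ∀ n, Integrable (fun ω => (∑ i ∈ Finset.range n, W i ω) * W n ω) μ := fun n => by
    simp only [Finset.sum_mul]
    exact integrable_finsetSum _ fun i _ => hij i n
  induction n with
  | zero => simp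
  | succ n ih =>
    have e : ∀ ω, (∑ i ∈ Finset.range (n + 1), W i ω) ^ 2 = (∑ i ∈ Finset.range n, W i ω) ^ 2
        + (2 * ((∑ i ∈ Finset.range n, W i ω) * W n ω) + W n ω * W n ω) := fun ω => by
      rw [Finset.sum_range_succ]; ring
    simp only [e]
    have hi2 : Integrable (fun ω => 2 * ((∑ i ∈ Finset.range n, W i ω) * W n ω) + W n ω * W n ω) μ :=
      ((hcr n).const_mul 2).add (hij n n)
    rw [integral_add (hsq n) hi2,
      integral_add ((hcr n).const_mul 2) (hij n n), integral_const_mul]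
    have h1 : ∫ ω, W n ω * W n ω ∂μ ≤ H ^ 2 := by
      have := integral_mono (hij n n) (integrable_const (H ^ 2)) fun ω => by
        show W n ω * W n ω ≤ H ^ 2
        rw [← sq]
        exact sq_le_sq' (abs_le.1 (hH n ω)).1 (abs_le.1 (hH n ω)).2
      simpa using this
    have h2 : ∫ ω, (∑ i ∈ Finset.range n, W i ω) * W n ω ∂μ ≤ D / m := by
      simp only [Finset.sum_mul]
      rw [integral_finsetSum _ fun i _ => hij i n]
      calc _ ≤ ∑ i ∈ Finset.range n, D * (1 - m) ^ (n - i) :=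
            Finset.sum_le_sum fun i hi => (le_abs_self _).trans (hc i n (Finset.mem_range.1 hi))
        _ = D * ∑ i ∈ Finset.range n, (1 - m) ^ (n - i) := by rw [Finset.mul_sum]
        _ ≤ D * (1 / m) := mul_le_mul_of_nonneg_left (aux_geom m hm0 hm1 n) hD
        _ = D / m := by ring
    push_cast
    linarith

section Chain
variable (S : ChainSetting E) (x : E) (P : Measure (Traj E))

lemma TrOp_bdd (ψ : E → ℝ) (B : ℝ) (hB : ∀ y, |ψ y| ≤ B) (y : E) : |TrOp S ψ y| ≤ B := by
  have := aux_skel_prob S y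
  have := norm_integral_le_of_norm_le_const (μ := S.skel y) (f := ψ) (C := B) (ae_of_all _ hB)
  simpa [TrOp] using this

lemma aux_step (hP : IsChainLaw S.r S.skel x P) (φ ψ : E → ℝ) (hφ : Measurable φ)
    (hψ : Measurable ψ) (B : ℝ) (hφB : ∀ y, |φ y| ≤ B) (hψB : ∀ y, |ψ y| ≤ B) (i n : ℕ)
    (hin : i ≤ n) :
    ∫ ω, φ (ω.1 i) * ψ (ω.1 (n + 1)) ∂P = ∫ ω, φ (ω.1 i) * TrOp S ψ (ω.1 n) ∂P := by
  have := hP.prob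
  have hsk := fun y => aux_skel_prob S y
  have h0 : ∀ y, 0 ≤ ψ y + B := fun y => by linarith [neg_abs_le (ψ y), hψB y]
  have h0' : ∀ y, 0 ≤ TrOp S ψ y + B := fun y => by
    linarith [neg_abs_le (TrOp S ψ y), TrOp_bdd S ψ B hψB y]
  have hv : ∀ y, ∫⁻ z, ENNReal.ofReal (ψ z + B) ∂S.skel y = ENNReal.ofReal (TrOp S ψ y + B) := by
    intro y
    have hi : Integrable ψ (S.skel y) := .of_bound hψ.aestronglyMeasurable B (ae_of_all _ hψB)
    rw [← ofReal_integral_eq_lintegral_ofReal (f := fun z => ψ z + B)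
      (hi.add (integrable_const B)) (ae_of_all _ h0), integral_add hi (integrable_const B)]
    simp [TrOp]
  have hT := TrOp_meas S ψ hψ
  have key := aux_bdd P (fun ω : Traj E => ω.1 i) (by fun_prop)
    (fun ω => ENNReal.ofReal (ψ (ω.1 (n + 1)) + B))
    (fun ω => ENNReal.ofReal (TrOp S ψ (ω.1 n) + B)) (by fun_prop) (by fun_prop)
    (ENNReal.ofReal (B + B)) ENNReal.ofReal_ne_top
    (fun ω => ENNReal.ofReal_le_ofReal (by linarith [le_abs_self (ψ (ω.1 (n+1))), hψB (ω.1 (n+1))]))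
    (fun ω => ENNReal.ofReal_le_ofReal
      (by linarith [le_abs_self (TrOp S ψ (ω.1 n)), TrOp_bdd S ψ B hψB (ω.1 n)]))
    (fun F hF => by
      have := hP.markov n (fun v => F (v ⟨i, by omega⟩)) (fun z => ENNReal.ofReal (ψ z + B))
        (by fun_prop) (by fun_prop)
      simpa only [hv] using this) φ hφ B hφB
  simp only [ENNReal.toReal_ofReal (h0 _), ENNReal.toReal_ofReal (h0' _), mul_add] at key
  have i1 : ∀ χ : E → ℝ, Measurable χ → (∀ y, |χ y| ≤ B) → ∀ l : ℕ,
      Integrable (fun ω : Traj E => φ (ω.1 i) * χ (ω.1 l)) P := fun χ hχ hχB l => by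
    refine .of_bound (Measurable.aestronglyMeasurable (by fun_prop)) (B * B)
      (ae_of_all _ fun ω => ?_)
    rw [norm_mul]
    exact mul_le_mul (hφB _) (hχB _) (norm_nonneg _) ((abs_nonneg _).trans (hφB x))
  have i2 : Integrable (fun ω : Traj E => φ (ω.1 i) * B) P :=
    i1 (fun _ => B) measurable_const
      (fun _ => (abs_of_nonneg ((abs_nonneg _).trans (hφB x))).le) 0
  rw [integral_add (i1 _ hψ hψB _) i2, integral_add (i1 _ hT (TrOp_bdd S ψ B hψB) _) i2] at key
  linarith

lemma aux_pair (hP : IsChainLaw S.r S.skel x P) (φ ψ : E → ℝ) (hφ : Measurable φ)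
    (hψ : Measurable ψ) (B : ℝ) (hφB : ∀ y, |φ y| ≤ B) (hψB : ∀ y, |ψ y| ≤ B) (i d : ℕ) :
    ∫ ω, φ (ω.1 i) * ψ (ω.1 (i + d)) ∂P = ∫ ω, φ (ω.1 i) * (TrOp S)^[d] ψ (ω.1 i) ∂P := by
  induction d generalizing ψ with
  | zero => rfl
  | succ d ih =>
    rw [Function.iterate_succ_apply, ← ih _ (TrOp_meas S ψ hψ) (TrOp_bdd S ψ B hψB),
      ← aux_step S x P hP φ ψ hφ hψ B hφB hψB i (i + d) (by omega)]
    rfl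

lemma aux_hold_lint (hP : IsChainLaw S.r S.skel x P) (i j : ℕ) (hij : i < j)
    (F : (ℕ → E) → ℝ≥0∞) (hF : Measurable F) (a b : ℝ≥0∞ → ℝ≥0∞) (ha : Measurable a)
    (hb : Measurable b) :
    ∫⁻ ω, F ω.1 * (a (ω.2 i) * b (ω.2 j)) ∂P
      = ∫⁻ ω, F ω.1 * ((∫⁻ s, a s ∂expMeasE (S.r (ω.1 i))) *
          (∫⁻ s, b s ∂expMeasE (S.r (ω.1 j)))) ∂P := by
  let i' : Fin (j + 1) := ⟨i, by omega⟩
  let j' : Fin (j + 1) := ⟨j, by omega⟩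
  have hne : i' ≠ j' := fun h => by
    have := congrArg Fin.val h
    simp only [i', j'] at this
    omega
  have h := hP.holding (j + 1) F
    (fun l s => (if l = i' then a s else 1) * (if l = j' then b s else 1)) hF
    (fun l => by split_ifs <;> fun_prop)
  have e : ∀ (l : Fin (j + 1)) (ρ : ℝ),
      ∫⁻ s, (if l = i' then a s else 1) * (if l = j' then b s else 1) ∂expMeasE ρ
      = (if l = i' then ∫⁻ s, a s ∂expMeasE ρ else 1) *
        (if l = j' then ∫⁻ s, b s ∂expMeasE ρ else 1) := by
    intro l ρ
    by_cases h1 : l = i'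
    · have h2 : l ≠ j' := h1 ▸ hne
      simp [h1, hne]
    · by_cases h2 : l = j'
      · simp [h2, hne.symm]
      · simp only [h1, h2, if_false, mul_one, aux_exp_prob]
  simp only [e, Finset.prod_mul_distrib, Finset.prod_ite_eq', Finset.mem_univ, if_true] at h
  exact h

lemma aux_hold1_lint (hP : IsChainLaw S.r S.skel x P) (i : ℕ)
    (a : ℝ≥0∞ → ℝ≥0∞) (ha : Measurable a) :
    ∫⁻ ω, a (ω.2 i) ∂P = ∫⁻ ω, ∫⁻ s, a s ∂expMeasE (S.r (ω.1 i)) ∂P := by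
  have := aux_hold_lint S x P hP i (i + 1) (by omega) (fun _ => 1) measurable_const a
    (fun _ => 1) ha measurable_const
  simpa only [aux_exp_prob, one_mul, mul_one] using this

lemma aux_exp_le (a : ℝ≥0∞ → ℝ≥0∞) (C : ℝ≥0∞) (haC : ∀ s, a s ≤ C) (ρ : ℝ) :
    ∫⁻ s, a s ∂expMeasE ρ ≤ C := by
  calc _ ≤ ∫⁻ s, C ∂expMeasE ρ := lintegral_mono haC
    _ = C * ∫⁻ s, 1 ∂expMeasE ρ := by simp
    _ = C := by rw [aux_exp_prob, mul_one]

lemma aux_hold (hP : IsChainLaw S.r S.skel x P) (i j : ℕ) (hij : i < j)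
    (F : (ℕ → E) → ℝ) (hF : Measurable F) (B : ℝ) (hB : ∀ z, |F z| ≤ B)
    (a b : ℝ≥0∞ → ℝ≥0∞) (ha : Measurable a)
    (hb : Measurable b) (C : ℝ≥0∞) (hC : C ≠ ∞) (haC : ∀ s, a s ≤ C) (hbC : ∀ s, b s ≤ C) :
    ∫ ω, F ω.1 * ((a (ω.2 i)).toReal * (b (ω.2 j)).toReal) ∂P
      = ∫ ω, F ω.1 * ((∫⁻ s, a s ∂expMeasE (S.r (ω.1 i))).toReal *
          (∫⁻ s, b s ∂expMeasE (S.r (ω.1 j))).toReal) ∂P := by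
  have := hP.prob
  have hr := S.r_cont.measurable
  have mA := aux_exp_meas a ha
  have mB := aux_exp_meas b hb
  have mA' : ∀ l : ℕ, Measurable fun ω : Traj E => ∫⁻ s, a s ∂expMeasE (S.r (ω.1 l)) := fun l =>
    mA.comp (hr.comp (by fun_prop))
  have mB' : ∀ l : ℕ, Measurable fun ω : Traj E => ∫⁻ s, b s ∂expMeasE (S.r (ω.1 l)) := fun l =>
    mB.comp (hr.comp (by fun_prop))
  have key := aux_bdd P (fun ω : Traj E => ω.1) (by fun_prop)
    (fun ω => a (ω.2 i) * b (ω.2 j))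
    (fun ω => (∫⁻ s, a s ∂expMeasE (S.r (ω.1 i))) * (∫⁻ s, b s ∂expMeasE (S.r (ω.1 j))))
    (by fun_prop) ((mA' i).mul (mB' j)) (C * C) (ENNReal.mul_ne_top hC hC)
    (fun ω => mul_le_mul' (haC _) (hbC _))
    (fun ω => mul_le_mul' (aux_exp_le a C haC _) (aux_exp_le b C hbC _))
    (fun G hG => aux_hold_lint S x P hP i j hij G hG a b ha hb) F hF B hB
  simpa only [ENNReal.toReal_mul] using key

end Chain

lemma aux_expand {Ω : Type*} [MeasurableSpace Ω] (μ : Measure Ω) [IsProbabilityMeasure μ]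
    (X Y : Ω → ℝ) (hX : Measurable X) (hY : Measurable Y) (B c : ℝ) (hXB : ∀ ω, |X ω| ≤ B)
    (hYB : ∀ ω, |Y ω| ≤ B) :
    ∫ ω, (X ω - c) * (Y ω - c) ∂μ = ∫ ω, X ω * Y ω ∂μ - c * ∫ ω, X ω ∂μ - c * ∫ ω, Y ω ∂μ
      + c ^ 2 := by
  have iX : Integrable X μ := .of_bound hX.aestronglyMeasurable B (ae_of_all _ hXB)
  have iY : Integrable Y μ := .of_bound hY.aestronglyMeasurable B (ae_of_all _ hYB)
  have iXY : Integrable (fun ω => X ω * Y ω) μ := by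
    refine .of_bound (hX.mul hY).aestronglyMeasurable (B * B) (ae_of_all _ fun ω => ?_)
    rw [norm_mul]
    exact mul_le_mul (hXB ω) (hYB ω) (norm_nonneg _) ((abs_nonneg _).trans (hXB ω))
  have e : ∀ ω, (X ω - c) * (Y ω - c) = X ω * Y ω - (c * X ω + c * Y ω - c ^ 2) :=
    fun ω => by ring
  have i1 : Integrable (fun ω => c * X ω + c * Y ω) μ := (iX.const_mul c).add (iY.const_mul c)
  have i2 : Integrable (fun ω => c * X ω + c * Y ω - c ^ 2) μ := i1.sub (integrable_const _)
  simp only [e]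
  rw [integral_sub iXY i2, integral_sub i1 (integrable_const _),
    integral_add (iX.const_mul c) (iY.const_mul c), integral_const_mul, integral_const_mul]
  simp
  ring

/-- truncated mean -/
def trA (S : ChainSetting E) (k : ℕ) (y : E) : ℝ≥0∞ := ∫⁻ s, min s k ∂expMeasE (S.r y)

/-- tail mean -/
def trD (S : ChainSetting E) (k : ℕ) (y : E) : ℝ≥0∞ := ∫⁻ s, (s - min s k) ∂expMeasE (S.r y)

section Trunc
variable (S : ChainSetting E)

lemma trA_meas (k : ℕ) : Measurable (trA S k) :=
  (aux_exp_meas (fun s => min s k) (by fun_prop)).comp S.r_cont.measurable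

lemma trD_meas (k : ℕ) : Measurable (trD S k) :=
  (aux_exp_meas (fun s => s - min s k) (by fun_prop)).comp S.r_cont.measurable

lemma trA_le (k : ℕ) (y : E) : trA S k y ≤ k :=
  aux_exp_le (fun s => min s k) k (fun _ => min_le_right _ _) _

lemma trA_add (k : ℕ) (y : E) : trA S k y + trD S k y = (ENNReal.ofReal (S.r y))⁻¹ := by
  rw [trA, trD, ← lintegral_add_left (by fun_prop), ← aux_exp_mean]
  congr 1; ext s
  exact add_tsub_cancel_of_le (min_le_left _ _)

lemma trD_le (k : ℕ) (y : E) : trD S k y ≤ (ENNReal.ofReal (S.r y))⁻¹ := by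
  rw [← trA_add S k y]; exact le_add_self

lemma trD_tendsto0 (y : E) (hy : (ENNReal.ofReal (S.r y))⁻¹ ≠ ∞) :
    Tendsto (fun k => trD S k y) atTop (𝓝 0) := by
  have h := tendsto_lintegral_of_dominated_convergence (μ := expMeasE (S.r y))
    (F := fun (k : ℕ) s => s - min s k) (f := fun _ => 0) (fun s => s)
    (fun k => by fun_prop) (fun k => ae_of_all _ fun s => tsub_le_self)
    (by rw [aux_exp_mean]; exact hy) ?_
  · simpa [trD] using h
  · have := ae_lt_top (μ := expMeasE (S.r y)) measurable_id (by
      show ∫⁻ s, s ∂expMeasE (S.r y) ≠ ∞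
      rw [aux_exp_mean]; exact hy)
    filter_upwards [this] with s hs
    obtain ⟨N, hN⟩ := ENNReal.exists_nat_gt hs.ne
    refine tendsto_const_nhds.congr' ?_
    filter_upwards [eventually_ge_atTop N] with k hk
    have : s ≤ k := hN.le.trans (by exact_mod_cast hk)
    simp [min_eq_left this]

lemma trD_tendsto : Tendsto (fun k => ∫⁻ y, trD S k y ∂S.lam) atTop (𝓝 0) := by
  have hr := S.r_cont.measurable
  have h := tendsto_lintegral_of_dominated_convergence (μ := S.lam)
    (F := fun (k : ℕ) y => trD S k y) (f := fun _ => 0) (fun y => (ENNReal.ofReal (S.r y))⁻¹)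
    (fun k => trD_meas S k) (fun k => ae_of_all _ fun s => trD_le S k s) S.inv_r_int ?_
  · simpa using h
  · filter_upwards [ae_lt_top (by fun_prop) S.inv_r_int] with y hy
    exact trD_tendsto0 S y hy.ne

lemma aux_tail (x : E) (P : Measure (Traj E)) (hP : IsChainLaw S.r S.skel x P) (M : ℝ)
    (hM : ∀ x y, S.p x y ≤ M) (k n : ℕ) :
    ∫⁻ ω, ∑ i ∈ Finset.range n, (ω.2 i - min (ω.2 i) k) ∂P ≤
      (ENNReal.ofReal (S.r x))⁻¹ + n * (ENNReal.ofReal M * ∫⁻ y, trD S k y ∂S.lam) := by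
  have := hP.prob
  rw [lintegral_finsetSum _ fun i _ => by fun_prop]
  have e : ∀ i : ℕ, ∫⁻ ω, (ω.2 i - min (ω.2 i) k) ∂P = ∫⁻ ω, trD S k (ω.1 i) ∂P := fun i =>
    aux_hold1_lint S x P hP i (fun s => s - min s k) (by fun_prop)
  simp only [e]
  have h0 : ∫⁻ ω, trD S k (ω.1 0) ∂P ≤ (ENNReal.ofReal (S.r x))⁻¹ := by
    rw [← lintegral_map (μ := P) (f := trD S k) (g := fun ω : Traj E => ω.1 0) (trD_meas S k)
      (by fun_prop), hP.init, lintegral_dirac' _ (trD_meas S k)]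
    exact trD_le S k x
  have h1 : ∀ i : ℕ, ∫⁻ ω, trD S k (ω.1 (i + 1)) ∂P
      ≤ ENNReal.ofReal M * ∫⁻ y, trD S k y ∂S.lam := fun i => by
    have := hP.markov i (fun _ => 1) (trD S k) measurable_const (trD_meas S k)
    simp only [one_mul] at this
    rw [this]
    calc _ ≤ ∫⁻ ω, ENNReal.ofReal M * ∫⁻ y, trD S k y ∂S.lam ∂P :=
          lintegral_mono fun ω => aux_skel_le S M hM _ _ (trD_meas S k)
      _ = _ := by simp
  cases n with
  | zero => simp
  | succ n =>
    rw [Finset.sum_range_succ', add_comm]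
    gcongr
    calc _ ≤ ∑ i ∈ Finset.range n, ENNReal.ofReal M * ∫⁻ y, trD S k y ∂S.lam :=
          Finset.sum_le_sum fun i _ => h1 i
      _ = n * (ENNReal.ofReal M * ∫⁻ y, trD S k y ∂S.lam) := by simp
      _ ≤ _ := by gcongr; simp

lemma aux_center (π₀ : Measure E) (hπ₀ : IsProbabilityMeasure π₀)
    (hπ₀inv : ∀ s : Set E, MeasurableSet s → ∫⁻ x, S.skel x s ∂π₀ = π₀ s)
    (M : ℝ) (hM : ∀ x y, S.p x y ≤ M) (f : E → ℝ) (hf : Measurable f) (B : ℝ)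
    (hB : ∀ y, |f y| ≤ B) (k : ℕ) :
    ENNReal.ofReal |∫ y, f y * (trA S k y).toReal ∂π₀ - ∫ y, f y / S.r y ∂π₀|
      ≤ ENNReal.ofReal B * (ENNReal.ofReal M * ∫⁻ y, trD S k y ∂S.lam) := by
  have hr := S.r_cont.measurable
  have hA := trA_meas S k
  have hfin : ∫⁻ y, (ENNReal.ofReal (S.r y))⁻¹ ∂π₀ ≠ ∞ :=
    ne_top_of_le_ne_top (ENNReal.mul_ne_top ENNReal.ofReal_ne_top S.inv_r_int)
      (aux_pi_le S π₀ hπ₀ hπ₀inv M hM _ (by fun_prop))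
  have hae := ae_lt_top (μ := π₀) (by fun_prop) hfin
  have i1 : Integrable (fun y => f y * (trA S k y).toReal) π₀ := by
    refine .of_bound (hf.mul hA.ennreal_toReal).aestronglyMeasurable (B * k)
      (ae_of_all _ fun y => ?_)
    rw [norm_mul, Real.norm_eq_abs, Real.norm_eq_abs, abs_of_nonneg ENNReal.toReal_nonneg]
    refine mul_le_mul (hB y) ?_ ENNReal.toReal_nonneg ((abs_nonneg _).trans (hB y))
    have := ENNReal.toReal_mono (ENNReal.natCast_ne_top k) (trA_le S k y)
    simpa using this
  have ir : Integrable (fun y => ((ENNReal.ofReal (S.r y))⁻¹).toReal) π₀ :=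
    integrable_toReal_of_lintegral_ne_top (by fun_prop) hfin
  have i2 : Integrable (fun y => f y / S.r y) π₀ := by
    have : (fun y => f y / S.r y) = fun y => f y * ((ENNReal.ofReal (S.r y))⁻¹).toReal := by
      ext y
      rw [ENNReal.toReal_inv, ENNReal.toReal_ofReal (S.r_nonneg y), div_eq_mul_inv]
    rw [this]
    exact ir.bdd_mul (c := B) hf.aestronglyMeasurable (ae_of_all _ hB)
  rw [← integral_sub i1 i2, ← Real.norm_eq_abs, ofReal_norm]
  calc _ ≤ ∫⁻ y, ‖f y * (trA S k y).toReal - f y / S.r y‖ₑ ∂π₀ := enorm_integral_le_lintegral_enorm _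
    _ ≤ ∫⁻ y, ENNReal.ofReal B * trD S k y ∂π₀ := by
      refine lintegral_mono_ae ?_
      filter_upwards [hae] with y hy
      have e := trA_add S k y
      have hAt : trA S k y ≠ ∞ := ne_top_of_le_ne_top (ENNReal.natCast_ne_top k) (trA_le S k y)
      have hDt : trD S k y ≠ ∞ := ne_top_of_le_ne_top hy.ne (trD_le S k y)
      have e2 := congrArg ENNReal.toReal e
      rw [ENNReal.toReal_add hAt hDt, ENNReal.toReal_inv, ENNReal.toReal_ofReal (S.r_nonneg y)] at e2
      have e3 : f y * (trA S k y).toReal - f y / S.r y = - (f y * (trD S k y).toReal) := by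
        rw [div_eq_mul_inv, ← e2]; ring
      rw [e3, enorm_neg, enorm_mul]
      gcongr
      · rw [← ofReal_norm]; exact ENNReal.ofReal_le_ofReal (hB y)
      · rw [Real.enorm_eq_ofReal ENNReal.toReal_nonneg, ENNReal.ofReal_toReal hDt]
    _ = ENNReal.ofReal B * ∫⁻ y, trD S k y ∂π₀ := lintegral_const_mul _ (trD_meas S k)
    _ ≤ _ := by gcongr; exact aux_pi_le S π₀ hπ₀ hπ₀inv M hM _ (trD_meas S k)

lemma aux_var (π₀ : Measure E) (hπ₀ : IsProbabilityMeasure π₀)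
    (hπ₀inv : ∀ s : Set E, MeasurableSet s → ∫⁻ x, S.skel x s ∂π₀ = π₀ s)
    (x : E) (P : Measure (Traj E)) (hP : IsChainLaw S.r S.skel x P)
    (m : ℝ) (hm0 : 0 < m) (hm1 : m < 1) (hm : ∀ x y, m ≤ S.p x y)
    (f : E → ℝ) (hf : Measurable f) (B : ℝ)
    (hB : ∀ y, |f y| ≤ B) (k : ℕ) (c : ℝ) (hc : c = ∫ y, f y * (trA S k y).toReal ∂π₀) (n : ℕ) :
    ∫ ω, (∑ i ∈ Finset.range n, (f (ω.1 i) * (min (ω.2 i) k).toReal - c)) ^ 2 ∂P ≤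
      n * ((2 * (B * k)) ^ 2 + 2 * (((2 * (B * k)) * (2 * (2 * (B * k)))) / m)) := by
  have := hP.prob
  have hB0 : 0 ≤ B := (abs_nonneg _).trans (hB x)
  have hA := trA_meas S k
  have hk0 : (0:ℝ) ≤ k := Nat.cast_nonneg k
  have mulb : ∀ (a : ℝ≥0∞) (y : E), a ≤ k → |f y * a.toReal| ≤ B * k := fun a y ha => by
    rw [abs_mul, abs_of_nonneg ENNReal.toReal_nonneg]
    refine mul_le_mul (hB y) ?_ ENNReal.toReal_nonneg hB0
    have := ENNReal.toReal_mono (ENNReal.natCast_ne_top k) ha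
    simpa using this
  let g : E → ℝ := fun y => f y * (trA S k y).toReal
  have hg : Measurable g := hf.mul hA.ennreal_toReal
  have hgB : ∀ y, |g y| ≤ B * k := fun y => mulb _ y (trA_le S k y)
  have hcB : |c| ≤ B * k := by
    have := norm_integral_le_of_norm_le_const (μ := π₀) (f := g) (C := B * k) (ae_of_all _ hgB)
    rw [hc]
    simpa using this
  have hh : Measurable fun y => g y - c := hg.sub measurable_const
  have hhB : ∀ y, |g y - c| ≤ 2 * (B * k) := fun y => by
    linarith [abs_sub (g y) c, hgB y, hcB]
  have hh0 : ∫ y, (g y - c) ∂π₀ = 0 := by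
    rw [integral_sub (.of_bound hg.aestronglyMeasurable _ (ae_of_all _ hgB)) (integrable_const c)]
    rw [hc]; simp [g]
  refine aux_second P (fun i ω => f (ω.1 i) * (min (ω.2 i) k).toReal - c) (fun i => ?_)
    (2 * (B * k)) ((2 * (B * k)) * (2 * (2 * (B * k)))) m (by positivity) hm0 hm1 (fun i ω => ?_)
    (fun i j hij => ?_) n
  · fun_prop
  · linarith [abs_sub (f (ω.1 i) * (min (ω.2 i) k).toReal) c,
      mulb (min (ω.2 i) k) (ω.1 i) (min_le_right _ _), hcB]
  · have mX : ∀ i : ℕ, Measurable fun ω : Traj E => f (ω.1 i) * (min (ω.2 i) k).toReal :=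
      fun i => by fun_prop
    have mG : ∀ i : ℕ, Measurable fun ω : Traj E => g (ω.1 i) := fun i => by fun_prop
    have e1 : ∀ i : ℕ, ∫ ω, f (ω.1 i) * (min (ω.2 i) k).toReal ∂P = ∫ ω, g (ω.1 i) ∂P := by
      intro i
      have := aux_hold S x P hP i (i + 1) (by omega) (fun z => f (z i)) (by fun_prop) B
        (fun z => hB _) (fun s => min s k) (fun _ => 1) (by fun_prop) measurable_const (k + 1)
        (by simp) (fun s => (min_le_right _ _).trans le_self_add) (fun s => le_add_self)
      simp only [aux_exp_prob, ENNReal.toReal_one, mul_one] at this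
      exact this
    have e2 : ∫ ω, (f (ω.1 i) * (min (ω.2 i) k).toReal) * (f (ω.1 j) * (min (ω.2 j) k).toReal) ∂P
        = ∫ ω, g (ω.1 i) * g (ω.1 j) ∂P := by
      have := aux_hold S x P hP i j hij (fun z => f (z i) * f (z j)) (by fun_prop) (B * B)
        (fun z => by
          rw [abs_mul]; exact mul_le_mul (hB _) (hB _) (abs_nonneg _) hB0)
        (fun s => min s k) (fun s => min s k) (by fun_prop) (by fun_prop) k
        (by simp) (fun s => min_le_right _ _) (fun s => min_le_right _ _)
      convert this using 3 with ω ω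
      · ring
      · simp only [g, trA]; ring
    have e3 : ∫ ω, (f (ω.1 i) * (min (ω.2 i) k).toReal - c) *
        (f (ω.1 j) * (min (ω.2 j) k).toReal - c) ∂P
        = ∫ ω, (g (ω.1 i) - c) * (g (ω.1 j) - c) ∂P := by
      rw [aux_expand P _ _ (mX i) (mX j) (B * k) c (fun ω => mulb _ _ (min_le_right _ _))
        (fun ω => mulb _ _ (min_le_right _ _)),
        aux_expand P _ _ (mG i) (mG j) (B * k) c (fun ω => hgB _) (fun ω => hgB _), e1, e1, e2]
    obtain ⟨d, rfl⟩ := Nat.exists_eq_add_of_le hij.le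
    obtain ⟨mT, bT⟩ := aux_mix S π₀ hπ₀ hπ₀inv m hm (fun y => g y - c) hh _ hhB hh0 d
    rw [e3, aux_pair S x P hP (fun y => g y - c) (fun y => g y - c) hh hh _ hhB hhB i d]
    have := norm_integral_le_of_norm_le_const (μ := P)
      (f := fun ω : Traj E => (g (ω.1 i) - c) * (TrOp S)^[d] (fun y => g y - c) (ω.1 i))
      (C := (2 * (B * k)) * ((1 - m) ^ d * (2 * (2 * (B * k))))) (ae_of_all _ fun ω => by
        rw [norm_mul]
        exact mul_le_mul (hhB _) (bT _) (norm_nonneg _) (by positivity))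
    simp only [probReal_univ, mul_one] at this
    rw [Nat.add_sub_cancel_left]
    refine this.trans (le_of_eq ?_)
    ring

end Trunc

lemma aux_main (S : ChainSetting E)
    (P : E → Measure (Traj E)) (hP : ∀ x, IsChainLaw S.r S.skel x (P x))
    (π₀ : Measure E) (hπ₀ : IsProbabilityMeasure π₀)
    (hπ₀inv : ∀ s : Set E, MeasurableSet s → ∫⁻ x, S.skel x s ∂π₀ = π₀ s)
    (f : C(E, ℝ)) (ε η δ : ℝ) (hε : 0 < ε) (hη : 0 < η) (hδ : 0 < δ) :
    ∃ N : ℕ, ∀ n ≥ N, ∀ x, δ ≤ S.r x →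
      P x {ω : Traj E | ε <
            |(1 / (n : ℝ)) * (∑ i ∈ Finset.range n, f (ω.1 i) * (ω.2 i).toReal)
              - ∫ y, f y / S.r y ∂π₀|} ≤ ENNReal.ofReal η := by
  obtain ⟨m, M, hm0, hm1, hM0, hmM⟩ := aux_p_bounds S
  have hm : ∀ x y, m ≤ S.p x y := fun x y => (hmM x y).1
  have hM : ∀ x y, S.p x y ≤ M := fun x y => (hmM x y).2
  have hf : Measurable f := f.continuous.measurable
  let B : ℝ := ‖f‖
  have hB : ∀ y, |f y| ≤ B := fun y => f.norm_coe_le_norm y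
  have hB0 : 0 ≤ B := norm_nonneg f
  let e : ℕ → ℝ≥0∞ := fun k => ENNReal.ofReal B * (ENNReal.ofReal M * ∫⁻ y, trD S k y ∂S.lam)
  have he : Tendsto e atTop (𝓝 0) := by
    have h1 := ENNReal.Tendsto.const_mul (a := ENNReal.ofReal M) (trD_tendsto S)
      (Or.inr ENNReal.ofReal_ne_top)
    have h2 := ENNReal.Tendsto.const_mul (a := ENNReal.ofReal B) h1
      (Or.inr ENNReal.ofReal_ne_top)
    simpa using h2
  obtain ⟨k, hk1, hk2⟩ := ((ENNReal.tendsto_nhds_zero.1 he (ENNReal.ofReal (ε / 3))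
    (by simpa using hε)).and (ENNReal.tendsto_nhds_zero.1 he (ENNReal.ofReal (ε * η / 6))
    (ENNReal.ofReal_pos.2 (by positivity)))).exists
  let c : ℝ := ∫ y, f y / S.r y ∂π₀
  let ck : ℝ := ∫ y, f y * (trA S k y).toReal ∂π₀
  have hck : |ck - c| ≤ ε / 3 := by
    have := (aux_center S π₀ hπ₀ hπ₀inv M hM f hf B hB k).trans hk1
    exact (ENNReal.ofReal_le_ofReal_iff (by positivity)).1 this
  let V : ℝ := (2 * (B * k)) ^ 2 + 2 * (((2 * (B * k)) * (2 * (2 * (B * k)))) / m)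
  have hV0 : 0 ≤ V := by positivity
  let K : ℝ := 3 * B / (δ * ε) + 9 * V / ε ^ 2
  obtain ⟨N, hN⟩ := exists_nat_ge (2 * K / η)
  refine ⟨max N 1, fun n hn x hx => ?_⟩
  have hn1 : (1:ℝ) ≤ n := by exact_mod_cast (le_max_right N 1).trans hn
  have hn0 : (0:ℝ) < n := by linarith
  have hnN : 2 * K / η ≤ n := hN.trans (by exact_mod_cast (le_max_left N 1).trans hn)
  have := (hP x).prob
  -- the two bad events
  let T1 : Traj E → ℝ≥0∞ := fun ω =>
    ENNReal.ofReal B * ∑ i ∈ Finset.range n, (ω.2 i - min (ω.2 i) k)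
  let Q : Traj E → ℝ := fun ω =>
    ∑ i ∈ Finset.range n, (f (ω.1 i) * (min (ω.2 i) k).toReal - ck)
  have hT1 : Measurable T1 := by fun_prop
  have hQ : Measurable Q := by fun_prop
  have hsub : {ω : Traj E | ε <
            |(1 / (n : ℝ)) * (∑ i ∈ Finset.range n, f (ω.1 i) * (ω.2 i).toReal) - c|} ⊆
      {ω | ENNReal.ofReal (ε / 3 * n) ≤ T1 ω} ∪
      {ω | ENNReal.ofReal ((ε / 3 * n) ^ 2) ≤ ENNReal.ofReal (Q ω ^ 2)} := by
    intro ω hω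
    by_contra hcon
    simp only [mem_union, mem_ofPred_eq, not_or, not_le] at hcon hω
    obtain ⟨h1, h2⟩ := hcon
    have h2' : |Q ω| < ε / 3 * n := by
      have := ENNReal.ofReal_lt_ofReal_iff_of_nonneg (sq_nonneg _) |>.1 h2
      exact abs_lt_of_sq_lt_sq this (by positivity)
    let R : ℝ := ∑ i ∈ Finset.range n, f (ω.1 i) * ((ω.2 i).toReal - (min (ω.2 i) k).toReal)
    have hR : ENNReal.ofReal |R| ≤ T1 ω := by
      calc ENNReal.ofReal |R| ≤ ENNReal.ofReal (∑ i ∈ Finset.range n,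
            |f (ω.1 i) * ((ω.2 i).toReal - (min (ω.2 i) k).toReal)|) :=
            ENNReal.ofReal_le_ofReal (Finset.abs_sum_le_sum_abs _ _)
        _ = ∑ i ∈ Finset.range n, ENNReal.ofReal
            |f (ω.1 i) * ((ω.2 i).toReal - (min (ω.2 i) k).toReal)| :=
            ENNReal.ofReal_sum_of_nonneg fun _ _ => abs_nonneg _
        _ ≤ ∑ i ∈ Finset.range n, ENNReal.ofReal B * (ω.2 i - min (ω.2 i) k) := by
            refine Finset.sum_le_sum fun i _ => ?_
            rw [abs_mul, ENNReal.ofReal_mul (abs_nonneg _)]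
            gcongr
            · exact hB _
            · rcases eq_or_ne (ω.2 i) ∞ with h | h
              · rw [h]; simp
              · have h3 : (min (ω.2 i) k).toReal ≤ (ω.2 i).toReal :=
                  ENNReal.toReal_mono h (min_le_left _ _)
                rw [abs_of_nonneg (by linarith), ← ENNReal.toReal_sub_of_le (min_le_left _ _) h]
                exact ENNReal.ofReal_toReal_le
        _ = T1 ω := by rw [← Finset.mul_sum]
    have hR' : |R| < ε / 3 * n := by
      have := hR.trans_lt h1
      exact (ENNReal.ofReal_lt_ofReal_iff_of_nonneg (abs_nonneg _)).1 this
    have hdec : (1 / (n : ℝ)) * (∑ i ∈ Finset.range n, f (ω.1 i) * (ω.2 i).toReal) - c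
        = (1 / n) * R + (1 / n) * Q ω + (ck - c) := by
      have : ∑ i ∈ Finset.range n, f (ω.1 i) * (ω.2 i).toReal = R + Q ω + n * ck := by
        simp only [R, Q, mul_sub, Finset.sum_sub_distrib, Finset.sum_const, Finset.card_range,
          nsmul_eq_mul]
        ring
      rw [this]
      field_simp
      ring
    rw [hdec] at hω
    have b1 : |(1 / (n:ℝ)) * R| < ε / 3 := by
      rw [abs_mul, abs_of_pos (by positivity), one_div, inv_mul_lt_iff₀ hn0]; linarith
    have b2 : |(1 / (n:ℝ)) * Q ω| < ε / 3 := by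
      rw [abs_mul, abs_of_pos (by positivity), one_div, inv_mul_lt_iff₀ hn0]; linarith
    have := abs_add_three ((1 / (n:ℝ)) * R) ((1 / (n:ℝ)) * Q ω) (ck - c)
    linarith
  have hpos : 0 < ε / 3 * n := by positivity
  have B1 : P x {ω | ENNReal.ofReal (ε / 3 * n) ≤ T1 ω}
      ≤ ENNReal.ofReal (3 * B / (δ * ε) / n + η / 2) := by
    refine (meas_ge_le_lintegral_div hT1.aemeasurable (ENNReal.ofReal_pos.2 hpos).ne'
      ENNReal.ofReal_ne_top).trans ?_
    refine ENNReal.div_le_of_le_mul ?_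
    calc ∫⁻ ω, T1 ω ∂P x ≤ ENNReal.ofReal B * ((ENNReal.ofReal (S.r x))⁻¹ +
          n * (ENNReal.ofReal M * ∫⁻ y, trD S k y ∂S.lam)) := by
          rw [lintegral_const_mul _ (by fun_prop)]
          gcongr
          exact aux_tail S x (P x) (hP x) M hM k n
      _ = ENNReal.ofReal B * (ENNReal.ofReal (S.r x))⁻¹ + n * e k := by
          simp only [e]; ring
      _ ≤ ENNReal.ofReal (B * δ⁻¹) + ENNReal.ofReal (n * (ε * η / 6)) := by
          rw [ENNReal.ofReal_mul hB0, ENNReal.ofReal_inv_of_pos hδ,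
            ENNReal.ofReal_mul hn0.le, ENNReal.ofReal_natCast]
          gcongr
      _ = ENNReal.ofReal (B * δ⁻¹ + n * (ε * η / 6)) :=
          (ENNReal.ofReal_add (by positivity) (by positivity)).symm
      _ = ENNReal.ofReal (3 * B / (δ * ε) / n + η / 2) * ENNReal.ofReal (ε / 3 * n) := by
          rw [← ENNReal.ofReal_mul (by positivity)]
          congr 1
          field_simp
          ring
  have B2 : P x {ω | ENNReal.ofReal ((ε / 3 * n) ^ 2) ≤ ENNReal.ofReal (Q ω ^ 2)}
      ≤ ENNReal.ofReal (9 * V / ε ^ 2 / n) := by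
    refine (meas_ge_le_lintegral_div (f := fun ω => ENNReal.ofReal (Q ω ^ 2)) (by fun_prop)
      (ENNReal.ofReal_pos.2 (by positivity)).ne'
      ENNReal.ofReal_ne_top).trans ?_
    refine ENNReal.div_le_of_le_mul ?_
    have hQi : Integrable (fun ω => Q ω ^ 2) (P x) := by
      have hQb : ∀ ω, |Q ω| ≤ ∑ i ∈ Finset.range n, (B * k + |ck|) := fun ω => by
        refine (Finset.abs_sum_le_sum_abs _ _).trans (Finset.sum_le_sum fun i _ => ?_)
        refine (abs_sub _ _).trans ?_
        gcongr
        rw [abs_mul, abs_of_nonneg ENNReal.toReal_nonneg]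
        refine mul_le_mul (hB _) ?_ ENNReal.toReal_nonneg hB0
        have := ENNReal.toReal_mono (ENNReal.natCast_ne_top k) (min_le_right (ω.2 i) k)
        simpa using this
      refine .of_bound (Measurable.aestronglyMeasurable (by fun_prop))
        ((∑ i ∈ Finset.range n, (B * k + |ck|)) ^ 2) (ae_of_all _ fun ω => ?_)
      rw [norm_pow, Real.norm_eq_abs]
      exact pow_le_pow_left₀ (abs_nonneg _) (hQb ω) 2
    rw [← ofReal_integral_eq_lintegral_ofReal hQi (ae_of_all _ fun ω => sq_nonneg _),
      ← ENNReal.ofReal_mul (by positivity)]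
    refine ENNReal.ofReal_le_ofReal ?_
    refine (aux_var S π₀ hπ₀ hπ₀inv x (P x) (hP x) m hm0 hm1 hm f hf B hB k ck rfl n).trans
      (le_of_eq ?_)
    show n * V = _
    field_simp
    norm_num
  refine (measure_mono hsub).trans ((measure_union_le _ _).trans ((add_le_add B1 B2).trans ?_))
  rw [← ENNReal.ofReal_add (by positivity) (by positivity)]
  refine ENNReal.ofReal_le_ofReal ?_
  have h3 : K / n ≤ η / 2 := by
    rw [div_le_iff₀ hη] at hnN
    rw [div_le_iff₀ hn0]
    linarith
  have h4 : K / n = 3 * B / (δ * ε) / n + 9 * V / ε ^ 2 / n := by simp only [K]; ring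
  linarith

/-- **Proposition 3.1** (law of large numbers for the skeleton). For each `f ∈ C(E)` and each
initial state `x ∈ E \ E₀`, the weighted average `(1/n) ∑_{i<n} f(Z_i) τ_i` converges in
probability to `π₀(f/r)`; the convergence is uniform over `x` in compact subsets of
`E \ E₀`. -/
theorem skeleton_lln (S : ChainSetting E)
    (P : E → Measure (Traj E)) (hP : ∀ x, IsChainLaw S.r S.skel x (P x))
    (π₀ : Measure E) (hπ₀ : IsProbabilityMeasure π₀)
    (hπ₀inv : ∀ s : Set E, MeasurableSet s → ∫⁻ x, S.skel x s ∂π₀ = π₀ s)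
    (f : C(E, ℝ)) :
    (∀ x, x ∉ S.E0 → ∀ ε > (0 : ℝ),
      Tendsto (fun n : ℕ =>
          P x {ω : Traj E | ε <
            |(1 / (n : ℝ)) * (∑ i ∈ Finset.range n, f (ω.1 i) * (ω.2 i).toReal)
              - ∫ y, f y / S.r y ∂π₀|})
        atTop (𝓝 (0 : ℝ≥0∞))) ∧
    (∀ K : Set E, IsCompact K → K ⊆ S.E0ᶜ → ∀ ε > (0 : ℝ),
      Tendsto (fun n : ℕ =>
          ⨆ x ∈ K, P x {ω : Traj E | ε <
            |(1 / (n : ℝ)) * (∑ i ∈ Finset.range n, f (ω.1 i) * (ω.2 i).toReal)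
              - ∫ y, f y / S.r y ∂π₀|})
        atTop (𝓝 (0 : ℝ≥0∞))) := by
  have main : ∀ K : Set E, IsCompact K → K ⊆ S.E0ᶜ → ∀ ε > (0 : ℝ),
      Tendsto (fun n : ℕ =>
          ⨆ x ∈ K, P x {ω : Traj E | ε <
            |(1 / (n : ℝ)) * (∑ i ∈ Finset.range n, f (ω.1 i) * (ω.2 i).toReal)
              - ∫ y, f y / S.r y ∂π₀|})
        atTop (𝓝 (0 : ℝ≥0∞)) := by
    intro K hK hKE ε hε
    obtain ⟨δ, hδ, hδK⟩ : ∃ δ > 0, ∀ x ∈ K, δ ≤ S.r x := by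
      rcases K.eq_empty_or_nonempty with rfl | hne
      · exact ⟨1, one_pos, by simp⟩
      · obtain ⟨z, hz, hmin⟩ := hK.exists_isMinOn hne S.r_cont.continuousOn
        exact ⟨S.r z, lt_of_le_of_ne (S.r_nonneg z) fun h => hKE hz h.symm, fun x hx => hmin hx⟩
    rw [ENNReal.tendsto_nhds_zero]
    intro θ hθ
    obtain ⟨η, hη0, hηθ⟩ := ENNReal.lt_iff_exists_nnreal_btwn.1 hθ
    obtain ⟨N, hN⟩ := aux_main S P hP π₀ hπ₀ hπ₀inv f ε η δ hε (by exact_mod_cast hη0) hδ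
    filter_upwards [eventually_ge_atTop N] with n hn
    refine iSup₂_le fun x hx => (hN n hn x (hδK x hx)).trans ?_
    rw [ENNReal.ofReal_coe_nnreal]
    exact hηθ.le
  refine ⟨fun x hx ε hε => ?_, main⟩
  have := main {x} isCompact_singleton (by simpa using hx) ε hε
  simpa only [mem_singleton_iff, iSup_iSup_eq_left] using this

end
end

section
/- Let a_ℓ → +∞ be any sequence. Then lim_{ℓ→∞} limsup_{T→∞} sup_{x∈E} (1/T) log P_x( Q_T(1) > a_ℓ ) = −∞, where Q_T(1) is the total mass of the empirical flow, i.e., the total number of jumps in [0,T] divided by T. In particular the family {P_x ∘ (μ_T,Q_T)^{-1}}_{T>0} is exponentially tight uniformly in x ∈ E. -/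
open MeasureTheory ProbabilityTheory Filter Topology Set ENNReal

noncomputable section

variable {E : Type*} [MeasurableSpace E] [TopologicalSpace E] [PolishSpace E]
  [CompactSpace E] [BorelSpace E] [Nonempty E]

namespace ExpTightAux

def gfun (θ : ℝ) (s : ℝ≥0∞) : ℝ≥0∞ := if s = ∞ then 0 else ENNReal.ofReal (Real.exp (-(θ * s.toReal)))

theorem gfun_meas (θ : ℝ) : Measurable (gfun θ) := by
  unfold gfun
  exact Measurable.ite (measurableSet_singleton _) measurable_const (by fun_prop)

theorem lintegral_gfun {θ R ρ : ℝ} (hθ : 0 < θ) (hR : 0 < R) (hρ : ρ ≤ R) :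
    ∫⁻ s, gfun θ s ∂expMeasE ρ ≤ ENNReal.ofReal (R / (R + θ)) := by
  unfold expMeasE
  split_ifs with h
  · rw [lintegral_map (gfun_meas θ) ENNReal.measurable_ofReal,
      lintegral_withDensity_eq_lintegral_mul _ _
        (show Measurable fun s => gfun θ (ENNReal.ofReal s) from
          (gfun_meas θ).comp ENNReal.measurable_ofReal)]
    · have h1 : ∀ s : ℝ, ((fun s => Set.indicator (Set.Ioi (0 : ℝ))
          (fun s => ENNReal.ofReal (ρ * Real.exp (-(ρ * s)))) s) *
          fun s => gfun θ (ENNReal.ofReal s)) s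
          = Set.indicator (Set.Ioi (0 : ℝ))
            (fun s => ENNReal.ofReal (ρ * Real.exp (-(ρ + θ) * s))) s := by
        intro s
        by_cases hs : s ∈ Set.Ioi (0 : ℝ)
        · have hs' : 0 < s := hs
          simp only [Pi.mul_apply, Set.indicator_of_mem hs, gfun, ENNReal.ofReal_ne_top, if_false,
            ENNReal.toReal_ofReal hs'.le]
          rw [← ENNReal.ofReal_mul (by positivity), mul_assoc, ← Real.exp_add]
          congr 3
          ring
        · simp only [Pi.mul_apply, Set.indicator_of_notMem hs, zero_mul]
      rw [lintegral_congr h1, lintegral_indicator measurableSet_Ioi]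
      have hneg : -(ρ + θ) < 0 := by linarith
      rw [← ofReal_integral_eq_lintegral_ofReal
        ((integrableOn_exp_mul_Ioi hneg 0).const_mul ρ)
        (Eventually.of_forall fun s => by positivity)]
      rw [integral_const_mul, integral_exp_mul_Ioi hneg]
      apply ENNReal.ofReal_le_ofReal
      have : ρ * (-Real.exp (-(ρ + θ) * 0) / -(ρ + θ)) = ρ / (ρ + θ) := by
        rw [mul_zero, Real.exp_zero, neg_div_neg_eq]; ring
      rw [this, div_le_div_iff₀ (by linarith) (by linarith)]
      nlinarith
    · exact Measurable.indicator (by fun_prop) measurableSet_Ioi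
  · rw [lintegral_dirac' _ (gfun_meas θ)]
    simp [gfun]

theorem prod_gfun {θ T : ℝ} (hθ : 0 < θ) (hT : 0 ≤ T) (n : ℕ) (τ : ℕ → ℝ≥0∞)
    (h : ∑ i ∈ Finset.range n, τ i ≤ ENNReal.ofReal T) :
    1 ≤ ENNReal.ofReal (Real.exp (θ * T)) * ∏ i : Fin n, gfun θ (τ i) := by
  have hfin : ∀ i ∈ Finset.range n, τ i ≠ ∞ := by
    intro i hi
    exact ((Finset.single_le_sum (f := τ) (fun _ _ => zero_le) hi).trans h).trans_lt
      ENNReal.ofReal_lt_top |>.ne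
  rw [Fin.prod_univ_eq_prod_range (fun i => gfun θ (τ i)) n]
  have h1 : ∏ i ∈ Finset.range n, gfun θ (τ i)
      = ENNReal.ofReal (Real.exp (-(θ * (∑ i ∈ Finset.range n, τ i).toReal))) := by
    rw [ENNReal.toReal_sum hfin, Finset.mul_sum, ← Finset.sum_neg_distrib, Real.exp_sum,
      ENNReal.ofReal_prod_of_nonneg (fun _ _ => (Real.exp_pos _).le)]
    exact Finset.prod_congr rfl fun i hi => by simp [gfun, hfin i hi]
  rw [h1, ← ENNReal.ofReal_mul (Real.exp_pos _).le, ← Real.exp_add]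
  have h2 : (∑ i ∈ Finset.range n, τ i).toReal ≤ T := ENNReal.toReal_le_of_le_ofReal hT h
  rw [← ENNReal.ofReal_one]
  apply ENNReal.ofReal_le_ofReal
  rw [Real.one_le_exp_iff]
  nlinarith

theorem jump_bound {E : Type*} [MeasurableSpace E] {ρ : E → ℝ} {κ : E → Measure E} {x : E}
    {P : Measure (Traj E)} (hP : IsChainLaw ρ κ x P) {R : ℝ} (hR : 0 < R) (hρ : ∀ y, ρ y ≤ R)
    {T : ℝ} (hT : 0 ≤ T) (n : ℕ) :
    P {ω | Traj.jumpTime n ω ≤ ENNReal.ofReal T}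
      ≤ ENNReal.ofReal (Real.exp (R * (Real.exp 1 - 1) * T - n)) := by
  have := hP.prob
  set θ := R * (Real.exp 1 - 1) with hθd
  have he : 1 < Real.exp 1 := by simp
  have hθ : 0 < θ := mul_pos hR (by linarith)
  have hq : R / (R + θ) = Real.exp (-1) := by
    rw [hθd, Real.exp_neg]; field_simp; ring
  have hm : Measurable fun ω : Traj E => ∏ i : Fin n, gfun θ (ω.2 i) := by
    refine Finset.measurable_prod _ fun i _ => (gfun_meas θ).comp ?_
    exact (measurable_pi_apply _).comp measurable_snd
  have hsub : {ω : Traj E | Traj.jumpTime n ω ≤ ENNReal.ofReal T}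
      ⊆ {ω | 1 ≤ ENNReal.ofReal (Real.exp (θ * T)) * ∏ i : Fin n, gfun θ (ω.2 i)} :=
    fun ω hω => prod_gfun hθ hT n ω.2 hω
  have hI : ∫⁻ ω, ∏ i : Fin n, gfun θ (ω.2 i) ∂P ≤ ENNReal.ofReal (Real.exp (-1)) ^ n := by
    have := hP.holding n (fun _ => 1) (fun _ => gfun θ) measurable_const (fun _ => gfun_meas θ)
    simp only [one_mul] at this
    rw [this]
    calc _ ≤ ∫⁻ ω, ENNReal.ofReal (Real.exp (-1)) ^ n ∂P := by
          refine lintegral_mono fun ω => ?_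
          calc _ ≤ ∏ i : Fin n, ENNReal.ofReal (Real.exp (-1)) :=
                Finset.prod_le_prod' fun i _ => hq ▸ lintegral_gfun hθ hR (hρ _)
            _ = _ := by simp
      _ = _ := by simp
  have := mul_meas_ge_le_lintegral (μ := P)
    (hm.const_mul (ENNReal.ofReal (Real.exp (θ * T)))) 1
  rw [one_mul, lintegral_const_mul _ hm] at this
  refine (measure_mono hsub).trans (this.trans ((mul_le_mul_right hI _).trans ?_))
  rw [← ENNReal.ofReal_pow (Real.exp_pos _).le, ← ENNReal.ofReal_mul (Real.exp_pos _).le,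
    ← Real.exp_nat_mul, ← Real.exp_add]
  apply ENNReal.ofReal_le_ofReal
  apply le_of_eq
  congr 1
  ring

theorem flow_sub {E : Type*} [MeasurableSpace E] {T a : ℝ} (hT : 0 < T) (ha : 0 ≤ a)
    (ω : Traj E) (h : ENNReal.ofReal a < empFlow T ω Set.univ) :
    Traj.jumpTime ⌈a * T⌉₊ ω ≤ ENNReal.ofReal T := by
  classical
  by_contra hc
  set N := ⌈a * T⌉₊ with hN
  have hmono : Monotone fun n => Traj.jumpTime n ω := fun m n hmn =>
    Finset.sum_le_sum_of_subset (Finset.range_mono hmn)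
  have hz : ∀ n, N ≤ n + 1 → ¬ (Traj.jumpTime (n + 1) ω ≤ ENNReal.ofReal T ∧ ω.1 n ≠ ω.1 (n + 1)) :=
    fun n hn h' => hc ((hmono hn).trans h'.1)
  have hN0 : N ≠ 0 := by
    intro h0
    rw [h0] at hc
    simp [Traj.jumpTime] at hc
  have hle : empFlow T ω Set.univ ≤ (ENNReal.ofReal T)⁻¹ * ((N - 1 : ℕ) : ℝ≥0∞) := by
    unfold empFlow
    rw [Measure.smul_apply, smul_eq_mul, Measure.sum_apply _ MeasurableSet.univ]
    gcongr
    rw [tsum_eq_sum (s := Finset.range (N - 1))]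
    · calc _ ≤ ∑ i ∈ Finset.range (N - 1), (1 : ℝ≥0∞) := by
            refine Finset.sum_le_sum fun i _ => ?_
            split_ifs <;> simp
        _ = _ := by simp
    · intro n hn
      rw [Finset.mem_range] at hn
      have := hz n (by omega)
      simp only [if_neg this]
      simp
  have hlt : ((N - 1 : ℕ) : ℝ) < a * T := by
    rw [← Nat.lt_ceil]; omega
  have h2 := h.trans_le hle
  rw [← ENNReal.ofReal_inv_of_pos hT, ← ENNReal.ofReal_natCast,
    ← ENNReal.ofReal_mul (by positivity), ENNReal.ofReal_lt_ofReal_iff_of_nonneg ha,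
    inv_mul_eq_div, lt_div_iff₀ hT] at h2
  linarith

theorem log_bound {E : Type*} [MeasurableSpace E] {ρ : E → ℝ} {κ : E → Measure E} {x : E}
    {P : Measure (Traj E)} (hP : IsChainLaw ρ κ x P) {R : ℝ} (hR : 0 < R) (hρ : ∀ y, ρ y ≤ R)
    {T a : ℝ} (hT : 0 < T) (ha : 0 ≤ a) {A : Set (Traj E)}
    (hA : A ⊆ {ω | ENNReal.ofReal a < empFlow T ω Set.univ}) :
    ((1 / T : ℝ) : EReal) * ENNReal.log (P A) ≤ ((R * (Real.exp 1 - 1) - a : ℝ) : EReal) := by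
  have h1 : P A ≤ ENNReal.ofReal (Real.exp ((R * (Real.exp 1 - 1) - a) * T)) := by
    refine (measure_mono fun ω hω => flow_sub hT ha ω (hA hω)).trans
      ((jump_bound hP hR hρ hT.le ⌈a * T⌉₊).trans ?_)
    apply ENNReal.ofReal_le_ofReal
    apply Real.exp_le_exp.2
    have := Nat.le_ceil (a * T)
    linarith
  have h2 := ENNReal.log_le_log h1
  rw [ENNReal.log_ofReal_of_pos (Real.exp_pos _), Real.log_exp] at h2
  refine (mul_le_mul_of_nonneg_left h2 (by
    rw [EReal.coe_nonneg]; positivity)).trans ?_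
  rw [← EReal.coe_mul, EReal.coe_le_coe_iff]
  apply le_of_eq
  field_simp

end ExpTightAux

/-- **Lemma 4.2** (exponential tightness). For any sequence `a_ℓ → ∞`,
`lim_ℓ limsup_T sup_x (1/T) log P_x(Q_T(1) > a_ℓ) = -∞`; in particular the family
`P_x ∘ (μ_T,Q_T)⁻¹` is exponentially tight, uniformly in `x ∈ E`. -/
theorem exponential_tightness (S : ChainSetting E)
    (P : E → Measure (Traj E)) (hP : ∀ x, IsChainLaw S.r S.skel x (P x)) :
    (∀ a : ℕ → ℝ, Tendsto a atTop atTop →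
      Tendsto (fun ℓ : ℕ =>
          Filter.limsup (fun T : ℝ => ⨆ x : E,
            ((1 / T : ℝ) : EReal) * ENNReal.log
              (P x {ω : Traj E | ENNReal.ofReal (a ℓ) < empFlow T ω Set.univ})) atTop)
        atTop (𝓝 (⊥ : EReal))) ∧
    (∀ b : ℝ, ∃ K : Set (ProbabilityMeasure E × FiniteMeasure (E × E)), IsCompact K ∧
      Filter.limsup (fun T : ℝ => ⨆ x : E,
          ((1 / T : ℝ) : EReal) * ENNReal.log (P x {ω : Traj E | empPair T ω ∉ K})) atTop
        ≤ ((-b : ℝ) : EReal)) := by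
  obtain ⟨R, hR, hρ⟩ : ∃ R : ℝ, 0 < R ∧ ∀ y, S.r y ≤ R := by
    obtain ⟨M, hM⟩ := (isCompact_range S.r_cont).bddAbove
    exact ⟨max M 1, by positivity, fun y => (hM ⟨y, rfl⟩).trans (le_max_left _ _)⟩
  have key : ∀ (a : ℝ), 0 ≤ a → ∀ A : ℝ → Set (Traj E),
      (∀ T, A T ⊆ {ω | ENNReal.ofReal a < empFlow T ω Set.univ}) →
      Filter.limsup (fun T : ℝ => ⨆ x : E,
        ((1 / T : ℝ) : EReal) * ENNReal.log (P x (A T))) atTop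
        ≤ ((R * (Real.exp 1 - 1) - a : ℝ) : EReal) := by
    intro a ha A hA
    refine Filter.limsup_le_of_le (by isBoundedDefault) ?_
    filter_upwards [eventually_gt_atTop 0] with T hT
    exact iSup_le fun x => ExpTightAux.log_bound (hP x) hR hρ hT ha (hA T)
  constructor
  · intro a ha
    rw [EReal.tendsto_nhds_bot_iff_real]
    intro c
    filter_upwards [ha.eventually_ge_atTop 0,
      ha.eventually_gt_atTop (R * (Real.exp 1 - 1) - c)] with ℓ h0 h1
    refine (key (a ℓ) h0 _ fun T => subset_rfl).trans_lt ?_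
    rw [EReal.coe_lt_coe_iff]
    linarith
  · intro b
    set a := max 0 (R * (Real.exp 1 - 1) + b) with ha
    refine ⟨Set.univ ×ˢ {ν : FiniteMeasure (E × E) | ν.mass ≤ a.toNNReal},
      isCompact_univ.prod (isCompact_setOfPred_finiteMeasure_le_of_compactSpace (E × E) _), ?_⟩
    refine (key a (le_max_left _ _) _ ?_).trans ?_
    · intro T ω hω
      simp only [Set.mem_ofPred_eq] at hω ⊢
      by_contra hc
      rw [not_lt] at hc
      apply hω
      refine ⟨Set.mem_univ _, ?_⟩
      have hf : IsFiniteMeasure (empFlow T ω) := ⟨hc.trans_lt ENNReal.ofReal_lt_top⟩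
      have h2 : (empPair T ω).2 = ⟨empFlow T ω, hf⟩ := dif_pos hf
      have h3 : ((empPair T ω).2 : Measure (E × E)) = empFlow T ω := by rw [h2]; rfl
      change (empPair T ω).2.mass ≤ a.toNNReal
      rw [← ENNReal.coe_le_coe, FiniteMeasure.ennreal_mass, h3]
      exact hc
    · rw [EReal.coe_le_coe_iff]
      have := le_max_right 0 (R * (Real.exp 1 - 1) + b)
      linarith

end
end

section
/- If I(μ,Q) < +∞ then Q is absolutely continuous with respect to λ×λ, say dQ = q dλ×dλ, and writing dμ = ϱ dλ + dμ_s for the Lebesgue decomposition of μ with respect to λ, one has I(μ,Q) = ∫∫ λ(dx)λ(dy) Φ(q(x,y), ϱ(x)r(x)p(x,y)) + μ_s(r), where Φ(a,b) := a log(a/b) − a + b. In particular, if μ is singular with respect to λ then I(μ,Q) < ∞ forces Q = 0. -/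
open MeasureTheory ProbabilityTheory Filter Topology Set ENNReal

noncomputable section

/-- The convex function `Ψ(a) = a log a - (a - 1)` (with `Ψ(0) = 1`), extended to `ℝ≥0∞`. -/
def PsiE (a : ℝ≥0∞) : ℝ≥0∞ :=
  if a = ∞ then ∞ else ENNReal.ofReal (a.toReal * Real.log a.toReal - a.toReal + 1)

open Classical in
/-- The joint rate functional `I(μ,Q)` of (2.3):
`I(μ,Q) = ∫∫ μ(dx)c(x,dy) Ψ(dQ/(μ(dx)c(x,dy)))` if the two marginals of `Q` coincide and
`Q ≪ μ(dx)c(x,dy)`, and `+∞` otherwise. -/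
def ChainSetting.rateI0 {E : Type*} [MeasurableSpace E] [TopologicalSpace E]
    (S : ChainSetting E) (μ : Measure E) (Q : Measure (E × E)) : ℝ≥0∞ :=
  if Q.fst = Q.snd ∧ Q ≪ S.muc μ
  then ∫⁻ z, PsiE (Q.rnDeriv (S.muc μ) z) ∂(S.muc μ)
  else ∞

/-- The joint rate functional `I` on `M₁(E) × M₊(E×E)`. -/
def ChainSetting.rateI {E : Type*} [MeasurableSpace E] [TopologicalSpace E]
    (S : ChainSetting E) (q : ProbabilityMeasure E × FiniteMeasure (E × E)) : ℝ≥0∞ :=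
  S.rateI0 (q.1 : Measure E) (q.2 : Measure (E × E))

/-- The convex lower semicontinuous function `Φ(a,b) = a log (a/b) - a + b`, extended to
`ℝ≥0∞` (with `Φ(0,b) = b` and `Φ(a,0) = ∞` for `a > 0`). -/
def PhiE (a b : ℝ≥0∞) : ℝ≥0∞ :=
  if a = 0 then b
  else if a = ∞ ∨ b = 0 ∨ b = ∞ then ∞
  else ENNReal.ofReal (a.toReal * Real.log (a.toReal / b.toReal) - a.toReal + b.toReal)

variable {E : Type*} [MeasurableSpace E] [TopologicalSpace E] [PolishSpace E]
  [CompactSpace E] [BorelSpace E] [Nonempty E]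


theorem PhiE_mul_aux (f g : ℝ≥0∞) (hg : g ≠ ∞) : PhiE (g * f) g = g * PsiE f := by
  unfold PhiE PsiE
  by_cases hg0 : g = 0
  · simp [hg0]
  by_cases hf : f = ∞
  · subst hf
    simp [hg0]
  by_cases hf0 : f = 0
  · simp [hf0]
  have hgf : g * f ≠ ∞ := ENNReal.mul_ne_top hg hf
  have hgf0 : g * f ≠ 0 := mul_ne_zero hg0 hf0
  rw [if_neg hgf0, if_neg (by simp [hgf, hg0, hg]), if_neg hf]
  have h1 : 0 < g.toReal := ENNReal.toReal_pos hg0 hg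
  conv_rhs => rw [← ENNReal.ofReal_toReal hg]
  rw [← ENNReal.ofReal_mul h1.le, ENNReal.toReal_mul, mul_div_cancel_left₀ _ h1.ne']
  congr 1
  ring

theorem measurable_PsiE : Measurable PsiE := by
  unfold PsiE
  refine Measurable.ite (measurableSet_singleton _) measurable_const ?_
  fun_prop

theorem muc_split (S : ChainSetting E) (μ : Measure E) [IsProbabilityMeasure μ] :
    S.muc μ = ((μ.singularPart S.lam).prod S.lam).withDensity
        (fun z => ENNReal.ofReal (S.r z.1 * S.p z.1 z.2))
      + (S.lam.prod S.lam).withDensity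
        (fun z => μ.rnDeriv S.lam z.1 * ENNReal.ofReal (S.r z.1 * S.p z.1 z.2)) := by
  haveI := S.lam_prob
  have hk : Measurable fun z : E × E => ENNReal.ofReal (S.r z.1 * S.p z.1 z.2) := by
    have := S.r_cont.measurable
    have := S.p_cont.measurable
    fun_prop
  have hρ : Measurable fun z : E × E => μ.rnDeriv S.lam z.1 :=
    (Measure.measurable_rnDeriv _ _).comp measurable_fst
  unfold ChainSetting.muc
  conv_lhs => rw [← Measure.singularPart_add_rnDeriv μ S.lam]
  rw [Measure.add_prod, withDensity_add_measure]
  congr 1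
  rw [prod_withDensity_left (Measure.measurable_rnDeriv _ _)]
  exact (withDensity_mul _ hρ hk).symm

/-- Representation (2.4) of the rate function: if `I(μ,Q) < ∞` then `Q ≪ λ×λ` and, writing
`dμ = ϱ dλ + dμ_s` for the Lebesgue decomposition of `μ` and `q = dQ/d(λ×λ)`,
`I(μ,Q) = ∫∫ λ(dx)λ(dy) Φ(q(x,y), ϱ(x)r(x)p(x,y)) + μ_s(r)`. In particular, if `μ` is
singular with respect to `λ` then `Q = 0`. -/
theorem rateI_representation (S : ChainSetting E)
    (μ : Measure E) (hμ : IsProbabilityMeasure μ)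
    (Q : Measure (E × E)) (hQ : IsFiniteMeasure Q)
    (hfin : S.rateI0 μ Q ≠ ∞) :
    Q ≪ S.lam.prod S.lam ∧
    S.rateI0 μ Q =
      (∫⁻ z, PhiE (Q.rnDeriv (S.lam.prod S.lam) z)
          (μ.rnDeriv S.lam z.1 * ENNReal.ofReal (S.r z.1 * S.p z.1 z.2))
        ∂(S.lam.prod S.lam))
      + ∫⁻ x, ENNReal.ofReal (S.r x) ∂(μ.singularPart S.lam) ∧
    (μ ⟂ₘ S.lam → Q = 0) := by
  haveI := S.lam_prob
  have hk : Measurable fun z : E × E => ENNReal.ofReal (S.r z.1 * S.p z.1 z.2) := by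
    have := S.r_cont.measurable
    have := S.p_cont.measurable
    fun_prop
  have hρ : Measurable fun z : E × E => μ.rnDeriv S.lam z.1 :=
    (Measure.measurable_rnDeriv _ _).comp measurable_fst
  have hcond : Q.fst = Q.snd ∧ Q ≪ S.muc μ := by
    by_contra h
    exact hfin (by unfold ChainSetting.rateI0; rw [if_neg h])
  obtain ⟨hmarg, hac⟩ := hcond
  have hacp : Q ≪ μ.prod S.lam := hac.trans (withDensity_absolutelyContinuous _ _)
  have hsnd : Q.snd ≪ S.lam := by
    have h := hacp.map measurable_snd
    refine h.trans ?_
    have : (μ.prod S.lam).map Prod.snd = S.lam := by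
      simpa [Measure.snd] using Measure.snd_prod (μ := μ) (ν := S.lam)
    rw [this]
  have hfst : Q.fst ≪ μ := by
    have h := hacp.map measurable_fst
    refine h.trans ?_
    have : (μ.prod S.lam).map Prod.fst = μ := by
      simpa [Measure.fst] using Measure.fst_prod (μ := μ) (ν := S.lam)
    rw [this]
  have hfl : Q.fst ≪ S.lam := hmarg ▸ hsnd
  set ν := S.lam.prod S.lam with hν
  set g : E × E → ℝ≥0∞ :=
    fun z => μ.rnDeriv S.lam z.1 * ENNReal.ofReal (S.r z.1 * S.p z.1 z.2) with hgdef
  have hg : Measurable g := hρ.mul hk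
  set Ms := ((μ.singularPart S.lam).prod S.lam).withDensity
        (fun z => ENNReal.ofReal (S.r z.1 * S.p z.1 z.2)) with hMs
  have hsplit : S.muc μ = Ms + ν.withDensity g := muc_split S μ
  haveI hMsf : SigmaFinite (S.muc μ) := SigmaFinite.withDensity_ofReal _
  set f := Q.rnDeriv (S.muc μ) with hfdef
  have hf : Measurable f := Measure.measurable_rnDeriv _ _
  have hQf : (S.muc μ).withDensity f = Q := Measure.withDensity_rnDeriv_eq _ _ hac
  obtain ⟨A, hA, hsA, hlA⟩ := Measure.mutuallySingular_singularPart μ S.lam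
  have hQA : Q (Prod.fst ⁻¹' Aᶜ) = 0 := by
    rw [← Measure.fst_apply hA.compl]; exact hfl hlA
  have hMsA : Ms (Prod.fst ⁻¹' A) = 0 := by
    refine withDensity_absolutelyContinuous _ _ ?_
    have : (Prod.fst ⁻¹' A : Set (E × E)) = A ×ˢ univ := by ext; simp
    rw [this, Measure.prod_prod, hsA, zero_mul]
  have hf0 : f =ᵐ[Ms] 0 := by
    have h1 : ∫⁻ z in Prod.fst ⁻¹' Aᶜ, f z ∂(S.muc μ) = 0 := by
      rw [← withDensity_apply _ (measurable_fst hA.compl), hQf, hQA]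
    rw [lintegral_eq_zero_iff hf] at h1
    have h2 : ∀ᵐ z ∂(S.muc μ), z ∈ Prod.fst ⁻¹' Aᶜ → f z = 0 :=
      (ae_restrict_iff' (measurable_fst hA.compl)).1 h1
    have h3 : ∀ᵐ z ∂Ms, z ∈ Prod.fst ⁻¹' Aᶜ → f z = 0 := by
      refine ae_mono ?_ h2
      rw [hsplit]
      exact Measure.le_add_right le_rfl
    have h4 : ∀ᵐ z ∂Ms, z ∉ Prod.fst ⁻¹' A := measure_eq_zero_iff_ae_notMem.1 hMsA
    filter_upwards [h3, h4] with z h5 h6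
    exact h5 h6
  have hQg : Q = ν.withDensity (g * f) := by
    conv_lhs => rw [← hQf, hsplit]
    rw [withDensity_add_measure, withDensity_congr_ae hf0, withDensity_zero, zero_add,
      withDensity_mul _ hg hf]
  have hQν : Q ≪ ν := by
    rw [hQg]; exact withDensity_absolutelyContinuous _ _
  have hq : Q.rnDeriv ν =ᵐ[ν] g * f := by
    conv_lhs => rw [hQg]
    exact Measure.rnDeriv_withDensity _ (hg.mul hf)
  have hgfin : ∀ᵐ z ∂ν, g z ≠ ∞ := by
    have h1 : ∀ᵐ x ∂S.lam, μ.rnDeriv S.lam x < ∞ := Measure.rnDeriv_lt_top _ _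
    have h2 : ∀ᵐ z ∂ν, μ.rnDeriv S.lam z.1 < ∞ :=
      Measure.quasiMeasurePreserving_fst.ae h1
    filter_upwards [h2] with z hz
    exact ENNReal.mul_ne_top hz.ne ENNReal.ofReal_ne_top
  refine ⟨hQν, ?_, ?_⟩
  · unfold ChainSetting.rateI0
    rw [if_pos ⟨hmarg, hac⟩]
    change ∫⁻ z, PsiE (f z) ∂(S.muc μ) = _
    rw [hsplit, lintegral_add_measure, add_comm]
    congr 1
    · rw [lintegral_withDensity_eq_lintegral_mul _ hg (g := fun z => PsiE (f z)) (measurable_PsiE.comp hf)]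
      refine lintegral_congr_ae ?_
      filter_upwards [hq, hgfin] with z h1 h2
      rw [h1]
      exact (PhiE_mul_aux (f z) (g z) h2).symm
    · have h1 : ∫⁻ z, PsiE (f z) ∂Ms = ∫⁻ z, 1 ∂Ms := by
        refine lintegral_congr_ae ?_
        filter_upwards [hf0] with z hz
        rw [hz]
        simp [PsiE]
      rw [h1, lintegral_one, hMs, withDensity_apply _ MeasurableSet.univ, Measure.restrict_univ,
        lintegral_prod _ hk.aemeasurable]
      refine lintegral_congr fun x => ?_
      simp only [ENNReal.ofReal_mul (S.r_nonneg x)]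
      rw [lintegral_const_mul' _ _ ENNReal.ofReal_ne_top]
      have hint : Integrable (S.p x) S.lam := by
        by_contra h
        have := S.p_int x
        rw [integral_undef h] at this
        exact zero_ne_one this
      rw [← ofReal_integral_eq_lintegral_ofReal hint (ae_of_all _ fun y => (S.p_pos x y).le),
        S.p_int x]
      simp
  · intro hsing
    have h0 : Q.fst = 0 := by
      obtain ⟨B, hB, h1, h2⟩ := hsing
      rw [← Measure.measure_univ_eq_zero, ← union_compl_self B]
      exact measure_union_null (hfst h1) (hfl h2)
    rw [← Measure.measure_univ_eq_zero, ← Measure.fst_univ, h0]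
    simp

end
end

section
/- Let (μ,Q) ∈ M₁(E)×M₊(E×E) be such that I(μ,Q) < +∞. Then ∫∫ Q(dx,dy) log( 1/(r(x)p(x,y)) ) < +∞. -/
open MeasureTheory ProbabilityTheory Filter Topology Set ENNReal

noncomputable section

/-- The positive part of an extended real, as an extended nonnegative real. -/
def ePos (x : EReal) : ℝ≥0∞ := if x = ⊤ then ∞ else ENNReal.ofReal x.toReal

/-- truncated `log (1/r)` -/
def gAux (r : ℝ) : ℝ≥0∞ := if r = 0 then ∞ else ENNReal.ofReal (- Real.log r)

lemma gAux_measurable : Measurable gAux := by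
  unfold gAux
  refine Measurable.ite (measurableSet_singleton 0) measurable_const ?_
  exact ENNReal.measurable_ofReal.comp Real.measurable_log.neg

lemma ePos_le_gAux {r p K : ℝ} (hr : 0 ≤ r) (hp : 0 < p) (hK : - Real.log p ≤ K) :
    ePos (ENNReal.log ((ENNReal.ofReal (r * p))⁻¹)) ≤ gAux r + ENNReal.ofReal K := by
  rcases hr.eq_or_lt with h | h
  · simp [gAux, ← h]
  · have hrp : 0 < r * p := mul_pos h hp
    rw [← ENNReal.ofReal_inv_of_pos hrp, ENNReal.log_ofReal_of_pos (inv_pos.2 hrp)]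
    simp only [ePos, gAux, h.ne', if_false, EReal.coe_ne_top, EReal.toReal_coe]
    refine le_trans ?_ ENNReal.ofReal_add_le
    apply ENNReal.ofReal_le_ofReal
    rw [Real.log_inv, Real.log_mul h.ne' hp.ne']
    linarith

lemma young_real {a b : ℝ} (ha : 0 ≤ a) :
    a * b ≤ (a * Real.log a - a + 1) + Real.exp b := by
  rcases ha.eq_or_lt with h | h
  · subst h; simp; positivity
  · have h1 := Real.add_one_le_exp (b - Real.log a)
    rw [Real.exp_sub, Real.exp_log h, le_div_iff₀ h] at h1
    nlinarith

lemma psi_nonneg {a : ℝ} (ha : 0 ≤ a) : 0 ≤ a * Real.log a - a + 1 := by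
  rcases ha.eq_or_lt with h | h
  · subst h; simp
  · have h1 := Real.one_sub_inv_le_log_of_pos h
    have h2 := mul_le_mul_of_nonneg_left h1 ha
    rw [mul_sub, mul_inv_cancel₀ h.ne'] at h2
    linarith

lemma young_gAux {r : ℝ} (hr : 0 ≤ r) (a : ℝ≥0∞) :
    a * gAux r ≤ PsiE a + (1 + (ENNReal.ofReal r)⁻¹) := by
  rcases hr.eq_or_lt with h | h
  · simp [← h]
  by_cases ha : a = ∞
  · simp [PsiE, ha]
  simp only [PsiE, ha, gAux, h.ne', if_false]
  rw [← ENNReal.ofReal_inv_of_pos h, ← ENNReal.ofReal_one,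
    ← ENNReal.ofReal_add zero_le_one (inv_pos.2 h).le,
    ← ENNReal.ofReal_add (psi_nonneg ENNReal.toReal_nonneg) (by positivity)]
  nth_rewrite 1 [← ENNReal.ofReal_toReal ha]
  rw [← ENNReal.ofReal_mul ENNReal.toReal_nonneg]
  apply ENNReal.ofReal_le_ofReal
  have h1 := young_real (a := a.toReal) (b := - Real.log r) ENNReal.toReal_nonneg
  rw [Real.exp_neg, Real.exp_log h] at h1
  linarith

variable {E : Type*} [MeasurableSpace E] [TopologicalSpace E] [PolishSpace E]
  [CompactSpace E] [BorelSpace E] [Nonempty E]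

set_option maxHeartbeats 1000000 in
/-- **Lemma 4.5**: if `I(μ,Q) < ∞` then `∫∫ Q(dx,dy) log (1/(r(x)p(x,y))) < ∞`. (Since
`log (1/(rp))` is bounded below on the compact `E × E` and `Q` is finite, this amounts to the
finiteness of the integral of the positive part.) -/
theorem log_integrable_of_rateI_lt_top (S : ChainSetting E)
    (μ : Measure E) (hμ : IsProbabilityMeasure μ)
    (Q : Measure (E × E)) (hQ : IsFiniteMeasure Q)
    (hfin : S.rateI0 μ Q ≠ ∞) :
    ∫⁻ z, ePos (ENNReal.log ((ENNReal.ofReal (S.r z.1 * S.p z.1 z.2))⁻¹)) ∂Q < ∞ := by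
  classical
  unfold ChainSetting.rateI0 at hfin
  split_ifs at hfin with hc
  swap
  · exact absurd rfl hfin
  obtain ⟨hmarg, hac⟩ := hc
  have := S.lam_prob
  have hcont : Continuous fun z : E × E => S.r z.1 * S.p z.1 z.2 :=
    (S.r_cont.comp continuous_fst).mul S.p_cont
  obtain ⟨C, hC⟩ : ∃ C : ℝ, ∀ z : E × E, S.r z.1 * S.p z.1 z.2 ≤ C := by
    obtain ⟨C, hC⟩ := (isCompact_range hcont).bddAbove
    exact ⟨C, fun z => hC ⟨z, rfl⟩⟩
  obtain ⟨K, hK⟩ : ∃ K : ℝ, ∀ z : E × E, - Real.log (S.p z.1 z.2) ≤ K := by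
    have h : Continuous fun z : E × E => - Real.log (S.p z.1 z.2) :=
      (S.p_cont.log fun z => (S.p_pos _ _).ne').neg
    obtain ⟨K, hK⟩ := (isCompact_range h).bddAbove
    exact ⟨K, fun z => hK ⟨z, rfl⟩⟩
  have hdm : Measurable fun z : E × E => ENNReal.ofReal (S.r z.1 * S.p z.1 z.2) :=
    ENNReal.measurable_ofReal.comp hcont.measurable
  have hrm : Measurable S.r := S.r_cont.measurable
  have hgm : Measurable fun x => gAux (S.r x) := gAux_measurable.comp hrm
  have him : Measurable fun x => 1 + (ENNReal.ofReal (S.r x))⁻¹ :=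
    measurable_const.add (ENNReal.measurable_ofReal.comp hrm).inv
  -- integrals against `muc`
  have hmuc : ∀ f : E × E → ℝ≥0∞, Measurable f →
      ∫⁻ z, f z ∂(S.muc μ) ≤ ENNReal.ofReal C * ∫⁻ z, f z ∂(μ.prod S.lam) := by
    intro f hf
    unfold ChainSetting.muc
    rw [lintegral_withDensity_eq_lintegral_mul _ hdm hf, ← lintegral_const_mul _ hf]
    apply lintegral_mono
    intro z
    exact mul_le_mul_left (ENNReal.ofReal_le_ofReal (hC z)) _
  have hfinm : IsFiniteMeasure (S.muc μ) := by
    constructor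
    have h := hmuc (fun _ => 1) measurable_const
    simp only [lintegral_const, measure_univ, one_mul, mul_one] at h
    exact h.trans_lt ENNReal.ofReal_lt_top
  have hexp : ∫⁻ z, (1 + (ENNReal.ofReal (S.r z.2))⁻¹) ∂(S.muc μ) < ∞ := by
    refine (hmuc _ (him.comp measurable_snd)).trans_lt ?_
    refine ENNReal.mul_lt_top ENNReal.ofReal_lt_top ?_
    have h : ∫⁻ z, (1 + (ENNReal.ofReal (S.r z.2))⁻¹) ∂(μ.prod S.lam)
        = ∫⁻ y, (1 + (ENNReal.ofReal (S.r y))⁻¹) ∂S.lam := by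
      have h2 : (μ.prod S.lam).snd = S.lam := by simp
      conv_rhs => rw [← h2]
      rw [Measure.snd, lintegral_map him measurable_snd]
    simp only [Function.comp_def]
    rw [h, lintegral_add_left measurable_const]
    simpa using S.inv_r_int.lt_top
  have hkey : ∫⁻ z, gAux (S.r z.2) ∂Q < ∞ := by
    have hgm2 : Measurable fun z : E × E => gAux (S.r z.2) := hgm.comp measurable_snd
    rw [← Measure.withDensity_rnDeriv_eq Q (S.muc μ) hac,
      lintegral_withDensity_eq_lintegral_mul _ (Measure.measurable_rnDeriv _ _) hgm2]
    have hle := lintegral_mono (μ := S.muc μ)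
      (fun z : E × E => young_gAux (S.r_nonneg z.2) (Q.rnDeriv (S.muc μ) z))
    have him2 : Measurable fun z : E × E => 1 + (ENNReal.ofReal (S.r z.2))⁻¹ :=
      him.comp measurable_snd
    rw [lintegral_add_right _ him2] at hle
    exact hle.trans_lt (ENNReal.add_lt_top.2 ⟨hfin.lt_top, hexp⟩)
  have hkey1 : ∫⁻ z, gAux (S.r z.1) ∂Q < ∞ := by
    rw [← lintegral_map hgm measurable_snd] at hkey
    rw [← lintegral_map hgm measurable_fst]
    change ∫⁻ x, gAux (S.r x) ∂Q.fst < ∞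
    rw [hmarg]
    exact hkey
  refine (lintegral_mono fun z =>
    ePos_le_gAux (S.r_nonneg z.1) (S.p_pos z.1 z.2) (hK z)).trans_lt ?_
  rw [lintegral_add_right _ measurable_const]
  refine ENNReal.add_lt_top.2 ⟨hkey1, ?_⟩
  rw [lintegral_const]
  exact ENNReal.mul_lt_top ENNReal.ofReal_lt_top (measure_lt_top _ _)

end
end

section
/- Let {P_n^α, α ∈ A}_{n∈ℕ} be a sequence of families of probability measures on a completely regular topological space X. Assume that for each z ∈ X there exists a sequence of families of probability measures {P̃_n^α(z)} converging weakly to δ_z uniformly with respect to α ∈ A and such that limsup_{n→∞} sup_{α∈A} (1/n) Ent(P̃_n^α(z) | P_n^α) ≤ J(z) for some J : X → [0,+∞]. Then the sequence {P_n^α, α ∈ A} satisfies, uniformly with respect to α ∈ A, the large deviation lower bound with rate function sc⁻J, the lower semicontinuous envelope of J: for every open set A' ⊂ X, liminf_{n→∞} inf_{α∈A} (1/n) log P_n^α(A') ≥ −inf_{z∈A'} (sc⁻J)(z), where (sc⁻J)(z) := sup_{U∈N_z} inf_{w∈U} J(w) and N_z is the collection of open neighborhoods of z. -/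
open MeasureTheory ProbabilityTheory Filter Topology Set ENNReal

noncomputable section


open Classical in
/-- Relative entropy `Ent(ν|μ) = ∫ log (dν/dμ) dν` (as upper integral minus lower integral,
and `⊤` when `ν` is not absolutely continuous with respect to `μ`). -/
def relEnt {α : Type*} [MeasurableSpace α] (ν μ : Measure α) : EReal :=
  if ν ≪ μ then
    ((∫⁻ x, ePos (ENNReal.log (ν.rnDeriv μ x)) ∂ν : ℝ≥0∞) : EReal)
      - ((∫⁻ x, ePos (-(ENNReal.log (ν.rnDeriv μ x))) ∂ν : ℝ≥0∞) : EReal)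
  else ⊤

/-- The lower semicontinuous envelope `sc⁻J(z) = sup_{U ∈ N_z} inf_{w ∈ U} J(w)`. -/
def scEnv {X : Type*} [TopologicalSpace X] (J : X → ℝ≥0∞) (z : X) : ℝ≥0∞ :=
  ⨆ (U : Set X) (_ : IsOpen U ∧ z ∈ U), ⨅ w ∈ U, J w

lemma aux_entropy {X : Type*} [MeasurableSpace X] (ν μ : Measure X)
    [IsProbabilityMeasure ν] [IsProbabilityMeasure μ] (r : ℝ) (hr : relEnt ν μ ≤ (r : EReal)) :
    ν ≪ μ ∧ Integrable (llr ν μ) ν ∧ ∫ x, llr ν μ x ∂ν ≤ r := by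
  have hac : ν ≪ μ := by
    by_contra hn
    rw [relEnt, if_neg hn] at hr
    exact absurd hr (by simp)
  rw [relEnt, if_pos hac] at hr
  have hpt : ∀ᵐ x ∂ν, ENNReal.log (ν.rnDeriv μ x) = ((llr ν μ x : ℝ) : EReal) := by
    filter_upwards [Measure.rnDeriv_pos hac, hac.ae_le (Measure.rnDeriv_ne_top ν μ)] with x h0 ht
    rw [ENNReal.log_pos_real h0.ne' ht, llr]
  have e1 : ∫⁻ x, ePos (ENNReal.log (ν.rnDeriv μ x)) ∂ν
      = ∫⁻ x, ENNReal.ofReal (llr ν μ x) ∂ν := by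
    apply lintegral_congr_ae
    filter_upwards [hpt] with x hx
    rw [hx, ePos, if_neg (EReal.coe_ne_top _), EReal.toReal_coe]
  have e2 : ∫⁻ x, ePos (-(ENNReal.log (ν.rnDeriv μ x))) ∂ν
      = ∫⁻ x, ENNReal.ofReal (-llr ν μ x) ∂ν := by
    apply lintegral_congr_ae
    filter_upwards [hpt] with x hx
    rw [hx, ← EReal.coe_neg, ePos, if_neg (EReal.coe_ne_top _), EReal.toReal_coe]
  rw [e1, e2] at hr
  have hneg : ∫⁻ x, ENNReal.ofReal (-llr ν μ x) ∂ν ≤ 1 := by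
    rw [← lintegral_rnDeriv_mul (f := fun x => ENNReal.ofReal (-llr ν μ x)) hac
      (measurable_llr ν μ).neg.ennreal_ofReal.aemeasurable]
    calc _ ≤ ∫⁻ x, 1 ∂μ := by
          apply lintegral_mono_ae
          filter_upwards [Measure.rnDeriv_ne_top ν μ] with x hx
          rw [← ENNReal.ofReal_toReal hx, ← ENNReal.ofReal_mul ENNReal.toReal_nonneg]
          apply ENNReal.ofReal_le_one.2
          rw [llr]
          set g := (ν.rnDeriv μ x).toReal with hg
          have hg0 : 0 ≤ g := ENNReal.toReal_nonneg
          rcases hg0.eq_or_lt with h | h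
          · rw [← h]; simp
          · have := Real.one_sub_inv_le_log_of_pos h
            have h2 : g * (1 - g⁻¹) ≤ g * Real.log g := by gcongr
            have h3 : g * (1 - g⁻¹) = g - 1 := by field_simp
            simp only [Measure.rnDeriv] at *
            nlinarith
      _ = 1 := by simp
  have hnegt : ∫⁻ x, ENNReal.ofReal (-llr ν μ x) ∂ν ≠ ∞ := ne_top_of_le_ne_top (by simp) hneg
  have hpost : ∫⁻ x, ENNReal.ofReal (llr ν μ x) ∂ν ≠ ∞ := by
    intro ht
    rw [ht] at hr
    lift (∫⁻ x, ENNReal.ofReal (-llr ν μ x) ∂ν) to NNReal using hnegt with q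
    have h4 : (((∞ : ℝ≥0∞) : EReal) - ((q : ℝ≥0∞) : EReal)) = ⊤ := by
      rw [EReal.coe_ennreal_top]
      exact EReal.top_sub_coe q
    rw [h4] at hr
    exact absurd hr (by simp)
  have hint : Integrable (llr ν μ) ν := by
    refine ⟨(stronglyMeasurable_llr ν μ).aestronglyMeasurable, ?_⟩
    rw [hasFiniteIntegral_iff_norm]
    calc ∫⁻ x, ENNReal.ofReal ‖llr ν μ x‖ ∂ν
        ≤ ∫⁻ x, (ENNReal.ofReal (llr ν μ x) + ENNReal.ofReal (-llr ν μ x)) ∂ν := by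
          apply lintegral_mono
          intro x
          dsimp only
          rw [Real.norm_eq_abs]
          rcases abs_cases (llr ν μ x) with ⟨h, _⟩ | ⟨h, _⟩ <;> rw [h] <;> simp
      _ = _ := lintegral_add_left (measurable_llr ν μ).ennreal_ofReal _
      _ < ∞ := by
          rw [ENNReal.add_lt_top]
          exact ⟨hpost.lt_top, hnegt.lt_top⟩
  refine ⟨hac, hint, ?_⟩
  rw [integral_eq_lintegral_pos_part_sub_lintegral_neg_part hint]
  lift (∫⁻ x, ENNReal.ofReal (-llr ν μ x) ∂ν) to NNReal using hnegt with q
  lift (∫⁻ x, ENNReal.ofReal (llr ν μ x) ∂ν) to NNReal using hpost with p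
  have : (((p : ℝ) - (q : ℝ) : ℝ) : EReal) ≤ (r : EReal) := by
    rw [EReal.coe_sub]
    exact hr
  exact_mod_cast this

lemma aux_dv {X : Type*} [MeasurableSpace X] (ν μ : Measure X)
    [IsProbabilityMeasure ν] [IsProbabilityMeasure μ] (r : ℝ) (hr : relEnt ν μ ≤ (r : EReal))
    (S : Set X) (hS : MeasurableSet S) (hνS : 0 < ν.real S) :
    0 < μ.real S ∧ -(ν.real S * Real.log (μ.real S)) ≤ r + Real.log 2 := by
  obtain ⟨hac, hint, hle⟩ := aux_entropy ν μ r hr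
  have hpos : 0 < μ.real S := by
    rw [measureReal_def, ENNReal.toReal_pos_iff]
    refine ⟨?_, measure_lt_top _ _⟩
    rw [pos_iff_ne_zero]
    intro h0
    have := hac h0
    rw [measureReal_def, this] at hνS
    simp at hνS
  refine ⟨hpos, ?_⟩
  set c := -Real.log (μ.real S) with hc
  set f : X → ℝ := S.indicator (fun _ => c) with hf
  have hfν : Integrable f ν := (integrable_const c).indicator hS
  have hexp : (fun x => Real.exp (f x)) = fun x =>
      S.indicator (fun _ => (μ.real S)⁻¹) x + Sᶜ.indicator (fun _ => (1:ℝ)) x := by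
    funext x
    by_cases hx : x ∈ S
    · simp [hf, hx, hc, Real.exp_neg, Real.exp_log hpos]
    · simp [hf, hx]
  have i1 : Integrable (S.indicator (fun _ => (μ.real S)⁻¹)) μ :=
    (integrable_const _).indicator hS
  have i2 : Integrable (Sᶜ.indicator (fun _ => (1:ℝ))) μ :=
    (integrable_const _).indicator hS.compl
  have hfμ : Integrable (fun x => Real.exp (f x)) μ := by
    rw [hexp]; exact i1.add i2
  have hE : ∫ x, Real.exp (f x) ∂μ ≤ 2 := by
    rw [hexp, integral_add i1 i2, integral_indicator_const _ hS,
      integral_indicator_const _ hS.compl]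
    have h1 : μ.real Sᶜ ≤ 1 := measureReal_le_one
    simp only [smul_eq_mul, mul_one]
    rw [mul_inv_cancel₀ hpos.ne']
    linarith
  have hE0 : 0 < ∫ x, Real.exp (f x) ∂μ := integral_exp_pos hfμ
  have hlog : Real.log (∫ x, Real.exp (f x) ∂μ) ≤ Real.log 2 := Real.log_le_log hE0 hE
  have hprob : IsProbabilityMeasure (μ.tilted f) := isProbabilityMeasure_tilted hfμ
  have hnn := InformationTheory.integral_llr_add_sub_measure_univ_nonneg
    (hac.trans (absolutelyContinuous_tilted hfμ)) (integrable_llr_tilted_right hac hfν hint hfμ)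
  rw [integral_llr_tilted_right hac hfν hfμ hint, hf, integral_indicator_const _ hS] at hnn
  simp only [probReal_univ, smul_eq_mul] at hnn
  have : ν.real S * c = -(ν.real S * Real.log (μ.real S)) := by rw [hc]; ring
  linarith

lemma aux_point {X : Type*} [TopologicalSpace X] [CompletelyRegularSpace X]
    [MeasurableSpace X] [BorelSpace X] {A : Type*}
    (P : ℕ → A → Measure X) (hP : ∀ n α, IsProbabilityMeasure (P n α)) (z : X)
    (Pt : ℕ → A → Measure X) (hPt : ∀ n α, IsProbabilityMeasure (Pt n α))
    (hw : ∀ f : BoundedContinuousFunction X ℝ,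
        Tendsto (fun n : ℕ => ⨆ α : A, ENNReal.ofReal |(∫ x, f x ∂Pt n α) - f z|)
          atTop (𝓝 (0 : ℝ≥0∞))) (b a : ℝ) (hb : 0 ≤ b) (hab : b < a)
    (hlim : Filter.limsup (fun n : ℕ =>
          ⨆ α : A, ((1 / (n : ℝ) : ℝ) : EReal) * relEnt (Pt n α) (P n α)) atTop < (b : EReal))
    (S : Set X) (hS : IsOpen S) (hz : z ∈ S) :
    ((-a : ℝ) : EReal) ≤ Filter.liminf (fun n : ℕ =>
            ⨅ α : A, ((1 / (n : ℝ) : ℝ) : EReal) * ENNReal.log (P n α S)) atTop := by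
  set ε : ℝ := (a - b) / (2 * (1 + a)) with hε
  have ha : 0 < a := by linarith
  have hε0 : 0 < ε := by apply div_pos <;> linarith
  have hεe : ε * (2 * (1 + a)) = a - b := by rw [hε]; field_simp
  have hε1 : ε < 1 := by nlinarith
  obtain ⟨f, hfc, hfz, hf1⟩ := CompletelyRegularSpace.completely_regular z Sᶜ hS.isClosed_compl
    (by simpa using hz)
  let F : BoundedContinuousFunction X ℝ :=
    BoundedContinuousFunction.ofNormedAddCommGroup (fun x => (f x : ℝ))
      (continuous_subtype_val.comp hfc) 1 (fun x => by
        rw [Real.norm_eq_abs, abs_of_nonneg (f x).2.1]; exact (f x).2.2)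
  have hF : ∀ x, F x = (f x : ℝ) := fun x => rfl
  have ev1 := (hw F).eventually_lt_const (ENNReal.ofReal_pos.2 hε0)
  have ev2 := Filter.eventually_lt_of_limsup_lt hlim
  have ev3 : ∀ᶠ n : ℕ in atTop, Real.log 2 / ε ≤ (n : ℝ) :=
    tendsto_natCast_atTop_atTop.eventually_ge_atTop _
  apply Filter.le_liminf_of_le
  · isBoundedDefault
  filter_upwards [ev1, ev2, ev3, eventually_gt_atTop 0] with n h1 h2 h3 h4
  have hn : (0 : ℝ) < n := by exact_mod_cast h4
  apply le_iInf
  intro α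
  have := hP n α
  have := hPt n α
  have h1' : |(∫ x, F x ∂Pt n α) - F z| < ε := by
    have := (le_iSup (fun α : A => ENNReal.ofReal |(∫ x, F x ∂Pt n α) - F z|) α).trans_lt h1
    exact (ENNReal.ofReal_lt_ofReal_iff hε0).1 this
  have h2' := (le_iSup (fun α : A =>
    ((1 / (n : ℝ) : ℝ) : EReal) * relEnt (Pt n α) (P n α)) α).trans_lt h2
  have hent : relEnt (Pt n α) (P n α) ≤ ((n * b : ℝ) : EReal) := by
    have h5 : relEnt (Pt n α) (P n α)
        = ((n : ℝ) : EReal) * (((1 / (n : ℝ) : ℝ) : EReal) * relEnt (Pt n α) (P n α)) := by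
      rw [← mul_assoc, ← EReal.coe_mul, mul_one_div_cancel hn.ne', EReal.coe_one, one_mul]
    rw [h5, EReal.coe_mul]
    exact mul_le_mul_of_nonneg_left h2'.le (by exact_mod_cast hn.le)
  have hνS : 1 - ε < (Pt n α).real S := by
    have hi : (Pt n α).real Sᶜ ≤ ∫ x, F x ∂Pt n α := by
      have h6 : ∫ x, Sᶜ.indicator (fun _ => (1:ℝ)) x ∂Pt n α = (Pt n α).real Sᶜ := by
        rw [integral_indicator_const _ hS.measurableSet.compl]; simp
      rw [← h6]
      apply integral_mono
      · exact (integrable_const _).indicator hS.measurableSet.compl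
      · exact F.integrable _
      · intro x
        dsimp only
        rw [hF]
        by_cases hx : x ∈ Sᶜ
        · rw [indicator_of_mem hx, hf1 hx]; simp
        · rw [indicator_of_notMem hx]; exact (f x).2.1
    have h7 : F z = 0 := by rw [hF, hfz]; rfl
    rw [h7, sub_zero] at h1'
    have h8 := (abs_lt.1 h1').2
    rw [probReal_compl_eq_one_sub hS.measurableSet] at hi
    linarith
  obtain ⟨hpos, hdv⟩ := aux_dv (Pt n α) (P n α) _ hent S hS.measurableSet (by linarith)
  have hne : P n α S ≠ 0 := by
    intro h0; rw [measureReal_def, h0] at hpos; simp at hpos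
  rw [ENNReal.log_pos_real hne (measure_ne_top _ _), ← EReal.coe_mul, EReal.coe_le_coe_iff]
  change -a ≤ 1 / (n : ℝ) * Real.log ((P n α).real S)
  set L := Real.log ((P n α).real S)
  set v := (Pt n α).real S
  have h9 : Real.log 2 ≤ n * ε := by rwa [div_le_iff₀ hε0] at h3
  have h10 : -(v * L) ≤ n * a * v := by
    have : b + ε ≤ a * (1 - ε) := by nlinarith
    have h11 : n * (b + ε) ≤ n * (a * (1 - ε)) := by gcongr
    have h12 : n * a * (1 - ε) ≤ n * a * v := by gcongr
    linarith
  have hv : 0 < v := by linarith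
  have h13 : -L ≤ n * a := by
    by_contra hcon
    push Not at hcon
    nlinarith
  rw [one_div, inv_mul_eq_div, le_div_iff₀ hn]
  linarith

/-- **Lemma 5.1** (large deviations lower bound from approximating tilted measures). Let
`{P_n^α, α ∈ A}` be a sequence of families of probability measures on a completely regular
topological space `X`. Assume that for each `z ∈ X` there are probability measures
`P̃_n^α(z)` converging weakly to `δ_z` uniformly in `α` with
`limsup_n sup_α (1/n) Ent(P̃_n^α(z)|P_n^α) ≤ J(z)`. Then the lower large deviations bound
with rate function `sc⁻J` holds, uniformly in `α`. -/
theorem lower_bound_from_entropy {X : Type*} [TopologicalSpace X] [CompletelyRegularSpace X]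
    [MeasurableSpace X] [BorelSpace X] {A : Type*} [Nonempty A]
    (P : ℕ → A → Measure X) (hP : ∀ n α, IsProbabilityMeasure (P n α))
    (J : X → ℝ≥0∞)
    (h : ∀ z : X, ∃ Pt : ℕ → A → Measure X,
      (∀ n α, IsProbabilityMeasure (Pt n α)) ∧
      (∀ f : BoundedContinuousFunction X ℝ,
        Tendsto (fun n : ℕ => ⨆ α : A, ENNReal.ofReal |(∫ x, f x ∂Pt n α) - f z|)
          atTop (𝓝 (0 : ℝ≥0∞))) ∧
      Filter.limsup (fun n : ℕ =>
          ⨆ α : A, ((1 / (n : ℝ) : ℝ) : EReal) * relEnt (Pt n α) (P n α)) atTop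
        ≤ (J z : EReal)) :
    ∀ A' : Set X, IsOpen A' →
      -(⨅ z ∈ A', (scEnv J z : EReal))
        ≤ Filter.liminf (fun n : ℕ =>
            ⨅ α : A, ((1 / (n : ℝ) : ℝ) : EReal) * ENNReal.log (P n α A')) atTop := by
  intro S hS
  have key : ∀ z ∈ S, -(J z : EReal) ≤ Filter.liminf (fun n : ℕ =>
            ⨅ α : A, ((1 / (n : ℝ) : ℝ) : EReal) * ENNReal.log (P n α S)) atTop := by
    intro z hz
    obtain ⟨Pt, hPt, hw, hlim⟩ := h z
    rw [EReal.neg_le]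
    apply EReal.le_of_forall_lt_iff_le.1
    intro a haJ
    obtain ⟨b, hJb, hba⟩ := EReal.lt_iff_exists_real_btwn.1 haJ
    have hb0 : (0 : EReal) ≤ (b : EReal) := (EReal.coe_ennreal_nonneg _).trans hJb.le
    rw [EReal.neg_le]
    exact aux_point P hP z Pt hPt hw b a (by exact_mod_cast hb0) (by exact_mod_cast hba)
      (hlim.trans_lt hJb) S hS hz
  rw [EReal.neg_le]
  refine le_iInf₂ fun z hz => ?_
  have h1 : (⨅ w ∈ S, J w) ≤ scEnv J z :=
    le_iSup₂ (f := fun (U : Set X) (_ : IsOpen U ∧ z ∈ U) => ⨅ w ∈ U, J w) S ⟨hS, hz⟩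
  refine le_trans ?_ (EReal.coe_ennreal_le_coe_ennreal_iff.2 h1)
  set L := Filter.liminf (fun n : ℕ =>
            ⨅ α : A, ((1 / (n : ℝ) : ℝ) : EReal) * ENNReal.log (P n α S)) atTop
  have h2 : (-L).toENNReal ≤ ⨅ w ∈ S, J w := by
    refine le_iInf₂ fun w hw => ?_
    have := EReal.toENNReal_le_toENNReal (EReal.neg_le.1 (key w hw))
    simpa using this
  exact le_trans (by rw [EReal.coe_toENNReal_eq_max]; exact le_max_right _ _) (EReal.coe_ennreal_le_coe_ennreal_iff.2 h2)

end
end
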